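/- For every positive integer n ≤ 4 there exist division rings F and G and a tight ring embedding φ : F → Mₙ(G). -/

import Mathlib

/-- `φ : F → Mₙ(α)` is `a`-tight: every possible upper-right `a × (n+1-a)` block
(rows `1,…,a`, columns `a,…,n`, one-indexed) is realized by some element of `F`. -/
def ATight {n : ℕ} {F α : Type*} (φ : F → Matrix (Fin n) (Fin n) α) (a : ℕ) : Prop :=
  ∀ g : Matrix (Fin n) (Fin n) α, ∃ x : F, ∀ i j : Fin n,
    (i : ℕ) < a → a ≤ (j : ℕ) + 1 → φ x i j = g i j

/-- A pair of division rings `F`, `G` together with a tight embedding `F → Mₙ(G)`. -/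
structure TightPair (n : ℕ) : Type 1 where
  F : Type
  G : Type
  [instF : DivisionRing F]
  [instG : DivisionRing G]
  φ : F →+* Matrix (Fin n) (Fin n) G
  injφ : Function.Injective φ
  tight : ∀ a : ℕ, 1 ≤ a → a ≤ n → ATight ⇑φ a

structure QData (n : ℕ) (K : Type) [Ring K] where
  z : K
  a : ℕ → K
  b : ℕ → K
  zc : ∀ x, Commute z x
  zn : z ^ n = 1
  zp : ∀ t, 0 < t → t < n → z ^ t ≠ 1
  hn : (n : K) ≠ 0
  ha : ∀ i, a i ≠ 0
  hb : ∀ i, b i ≠ 0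
  ba : ∀ i, b i * a i = z * (a i * b i)
  aa : ∀ i j, Commute (a i) (a j)
  bb : ∀ i j, Commute (b i) (b j)
  ab : ∀ i j, i ≠ j → Commute (a i) (b j)
  bn : ∀ i x, Commute (b i ^ n) x
  ne1 : ∀ i, (b i ^ n * a (i + 1) ^ n) ^ 2 ≠ 1


section Model

open HahnSeries HahnSeries.SummableFamily

theorem pow_fin_co {Γ R : Type*} [AddCommMonoid Γ] [LinearOrder Γ] [IsOrderedCancelAddMonoid Γ]
    [Ring R] {x : HahnSeries Γ R} (hx : 0 < x.orderTop) (g : Γ) :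
    Set.Finite {a | ((fun n ↦ x ^ n) a).coeff g ≠ 0} := by
  have hpwo : Set.IsPWO (⋃ n, support (x ^ n)) :=
    isPWO_iUnion_support_powers (zero_le_orderTop_iff.mp <| le_of_lt hx)
  by_cases h0 : x = 0
  · exact h0 ▸ Set.Finite.subset (Set.finite_singleton 0) (co_support_zero g)
  by_cases hg : g ∈ ⋃ n : ℕ, { g | (x ^ n).coeff g ≠ 0 }
  swap
  · exact Set.finite_empty.subset fun n hn => hg (Set.mem_iUnion.2 ⟨n, hn⟩)
  apply hpwo.isWF.induction hg
  intro y ys hy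
  refine ((((Finset.antidiagonal x.isPWO_support hpwo y).finite_toSet.biUnion
    fun ij hij => hy ij.snd (Finset.mem_antidiagonal.1 (Finset.mem_coe.1 hij)).2.1 ?_).image
      Nat.succ).union (Set.finite_singleton 0)).subset ?_
  · obtain ⟨hi, _, rfl⟩ := Finset.mem_antidiagonal.1 (Finset.mem_coe.1 hij)
    exact lt_add_of_pos_left ij.2 <| lt_of_lt_of_le ((zero_lt_orderTop_iff h0).mp hx) <|
      order_le_of_coeff_ne_zero <| Function.mem_support.mp hi
  · rintro (_ | n) hn
    · exact Set.mem_union_right _ (Set.mem_singleton 0)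
    · obtain ⟨i, hi, j, hj, rfl⟩ := support_mul_subset hn
      refine Set.mem_union_left _ ⟨n, Set.mem_iUnion.2 ⟨⟨j, i⟩, Set.mem_iUnion.2 ⟨?_, hi⟩⟩, rfl⟩
      simp only [Finset.mem_coe, Finset.mem_antidiagonal, mem_support, ne_eq, Set.mem_iUnion]
      exact ⟨hj, ⟨n, hi⟩, add_comm j i⟩

theorem exists_geom_inv {Γ R : Type*} [AddCommMonoid Γ] [LinearOrder Γ] [IsOrderedCancelAddMonoid Γ]
    [Ring R] {x : HahnSeries Γ R} (hx : 0 < x.orderTop) :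
    ∃ s : SummableFamily Γ R ℕ, (∀ n, s n = x ^ n) ∧ (1 - x) * s.hsum = 1 := by
  let s : SummableFamily Γ R ℕ :=
    { toFun := fun n => x ^ n
      isPWO_iUnion_support' := isPWO_iUnion_support_powers (zero_le_orderTop_iff.mp <| le_of_lt hx)
      finite_co_support' := fun g => pow_fin_co hx g }
  have hs : ∀ n, s n = x ^ n := fun n => rfl
  refine ⟨s, hs, ?_⟩
  have e : (x • s).embDomain ⟨Nat.succ, Nat.succ_injective⟩ =
      s - SummableFamily.ofFinsupp (Finsupp.single 0 (1 : HahnSeries Γ R)) := by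
    apply SummableFamily.ext
    rintro (_ | n)
    · simp [hs]
    · simp [embDomain_apply, of_symm_smul_of_eq_mul, hs, pow_succ',
      -smul_eq_mul]
  rw [← hsum_smul, sub_smul 1 x s, one_smul, hsum_sub, ←
    hsum_embDomain (x • s) ⟨Nat.succ, Nat.succ_injective⟩, e]
  simp

abbrev Gam := Lex (ℕ →₀ ℤ)

noncomputable def Bf (g h : Gam) : ℤ :=
  (ofLex g).sum (fun i m => if Even i then m * (ofLex h) (i + 1) else 0)

theorem Bf_add_left (g g' h : Gam) : Bf (g + g') h = Bf g h + Bf g' h := by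
  unfold Bf
  rw [ofLex_add, Finsupp.sum_add_index']
  · intro i; simp
  · intro i m m'; split_ifs <;> ring

theorem Bf_add_right (g h h' : Gam) : Bf g (h + h') = Bf g h + Bf g h' := by
  unfold Bf
  rw [← Finsupp.sum_add]
  refine Finsupp.sum_congr fun i _ => ?_
  split_ifs
  · rw [ofLex_add, Finsupp.add_apply, mul_add]
  · rfl

theorem Bf_zero_left (h : Gam) : Bf 0 h = 0 := by simpa using Bf_add_left 0 0 h
theorem Bf_zero_right (h : Gam) : Bf h 0 = 0 := by simpa using Bf_add_right h 0 0
theorem Bf_neg_left (g h : Gam) : Bf (-g) h = - Bf g h := by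
  have := Bf_add_left (-g) g h
  rw [neg_add_cancel, Bf_zero_left] at this; lia
theorem Bf_neg_right (g h : Gam) : Bf g (-h) = - Bf g h := by
  have := Bf_add_right g (-h) h
  rw [neg_add_cancel, Bf_zero_right] at this; lia

noncomputable def eg (i : ℕ) : Gam := toLex (Finsupp.single i 1)

theorem Bf_eg (i j : ℕ) : Bf (eg i) (eg j) = if Even i ∧ j = i + 1 then 1 else 0 := by
  unfold Bf eg
  rw [ofLex_toLex, Finsupp.sum_single_index (by simp)]
  by_cases h : Even i <;> simp [h, Finsupp.single_apply]

noncomputable def chi (z : ℂˣ) (g h : Gam) : ℂ := ((z ^ Bf g h : ℂˣ) : ℂ)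

theorem chi_add_left (z g g' h) : chi z (g + g') h = chi z g h * chi z g' h := by
  simp [chi, zpow_add, Bf_add_left]

theorem chi_add_right (z g h h') : chi z g (h + h') = chi z g h * chi z g h' := by
  simp [chi, zpow_add, Bf_add_right]

theorem chi_ne (z g h) : chi z g h ≠ 0 := Units.ne_zero _

theorem chi_pow (z : ℂˣ) (n : ℕ) (hz : z ^ n = 1) (g h) : chi z g h ^ n = 1 := by
  rw [chi, ← Units.val_pow_eq_pow_val, ← zpow_natCast, zpow_comm, zpow_natCast, hz]; simp

noncomputable def cc (z : ℂˣ) (g : Gam) : Module.End ℂ (Gam → ℂ) where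
  toFun f := fun x => chi z g x * f (x + g)
  map_add' f f' := by ext x; simp [mul_add]
  map_smul' r f := by ext x; simp; ring

theorem cc_mul (z : ℂˣ) (g h : Gam) : cc z g * cc z h = chi z h g • cc z (g + h) := by
  ext f x
  simp [cc, chi_add_left, chi_add_right, add_assoc]
  ring

theorem cc_zero (z : ℂˣ) : cc z 0 = 1 := by
  ext f x
  simp [cc, chi, Bf_zero_left]

theorem cc_comm (z : ℂˣ) (g h : Gam) :
    cc z g * cc z h = (chi z h g * (chi z g h)⁻¹) • (cc z h * cc z g) := by
  rw [cc_mul, cc_mul, smul_smul, mul_assoc, inv_mul_cancel₀ (chi_ne _ _ _), mul_one, add_comm]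

theorem cc_ne (z : ℂˣ) (g : Gam) : cc z g ≠ 0 := by
  intro h
  have := congrArg (fun F : Module.End ℂ (Gam → ℂ) => F (fun _ => 1) 0) h
  simp [cc] at this
  exact chi_ne _ _ _ this

abbrev HS := HahnSeries Gam (Module.End ℂ (Gam → ℂ))

def TT (z : ℂˣ) : Subring HS where
  carrier := {s | ∀ g, ∃ r : ℂ, s.coeff g = r • cc z g}
  mul_mem' := by
    intro s t hs ht g
    rw [coeff_mul]
    choose r hr using hs
    choose q hq using ht
    refine ⟨∑ ij ∈ Finset.antidiagonal s.isPWO_support t.isPWO_support g,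
      r ij.1 * q ij.2 * chi z ij.2 ij.1, ?_⟩
    rw [Finset.sum_smul]
    refine Finset.sum_congr rfl fun ij hij => ?_
    have := (Finset.mem_antidiagonal.1 hij).2.2
    rw [hr, hq, smul_mul_smul_comm, cc_mul, smul_smul, this]
  one_mem' := by
    intro g
    rw [coeff_one]
    split_ifs with h
    · exact ⟨1, by rw [h, cc_zero, one_smul]⟩
    · exact ⟨0, by simp⟩
  add_mem' := by
    intro s t hs ht g
    obtain ⟨r, hr⟩ := hs g
    obtain ⟨q, hq⟩ := ht g
    exact ⟨r + q, by rw [coeff_add, hr, hq, add_smul]⟩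
  zero_mem' := fun g => ⟨0, by simp⟩
  neg_mem' := by
    intro s hs g
    obtain ⟨r, hr⟩ := hs g
    exact ⟨-r, by rw [coeff_neg, hr]; exact (neg_smul r (cc z g)).symm⟩

theorem single_mem (z : ℂˣ) (g : Gam) (r : ℂ) : (single g (r • cc z g) : HS) ∈ TT z := by
  intro h
  rw [coeff_single]
  split_ifs with e
  · exact ⟨r, by rw [e]⟩
  · exact ⟨0, by simp⟩

theorem TT_inv (z : ℂˣ) (s : HS) (hs : s ∈ TT z) (h0 : s ≠ 0) : ∃ t ∈ TT z, s * t = 1 := by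
  obtain ⟨r, hr⟩ := hs s.order
  set γ := s.order with hγ
  have hr0 : r ≠ 0 := by
    rintro rfl
    rw [zero_smul] at hr
    exact coeff_order_eq_zero.not.2 h0 hr
  set q : ℂ := r⁻¹ * (chi z γ (-γ))⁻¹ with hq
  have hc : chi z (-γ) γ = chi z γ (-γ) := by simp [chi, Bf_neg_left, Bf_neg_right]
  have e1 : (q • cc z (-γ)) * (r • cc z γ) = 1 := by
    rw [smul_mul_smul_comm, cc_mul, smul_smul, neg_add_cancel, cc_zero]
    have : q * r * chi z γ (-γ) = 1 := by
      rw [hq]; have := chi_ne z γ (-γ); field_simp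
    rw [this, one_smul]
  have e2 : (r • cc z γ) * (q • cc z (-γ)) = 1 := by
    rw [smul_mul_smul_comm, cc_mul, smul_smul, add_neg_cancel, cc_zero]
    have : r * q * chi z (-γ) γ = 1 := by
      rw [hq, hc]; have := chi_ne z γ (-γ); field_simp
    rw [this, one_smul]
  set p : HS := single (-γ) (q • cc z (-γ)) with hp
  have hpm : p ∈ TT z := single_mem _ _ _
  set l : HS := single γ (r • cc z γ) with hl
  have hpl : p * l = 1 := by
    rw [hp, hl, single_mul_single, e1, neg_add_cancel, single_zero_one]
  have hlp : l * p = 1 := by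
    rw [hp, hl, single_mul_single, e2, add_neg_cancel, single_zero_one]
  set x : HS := 1 - p * s with hx
  have hxm : x ∈ TT z := sub_mem (one_mem _) (mul_mem hpm hs)
  have hxc : ∀ g ≤ 0, x.coeff g = 0 := by
    intro g hg
    rw [hx, coeff_sub, hp, coeff_single_mul, coeff_one]
    rcases hg.eq_or_lt with rfl | hg
    · simp only [zero_sub, neg_neg, if_true]
      rw [hr, e1, sub_self]
    · rw [if_neg hg.ne, coeff_eq_zero_of_lt_order, mul_zero, sub_zero]
      rw [← hγ, sub_neg_eq_add]
      exact add_lt_of_neg_left γ hg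
  have hx0 : 0 < x.orderTop := by
    by_cases hx0 : x = 0
    · rw [hx0, orderTop_zero]; exact WithTop.top_pos
    · rw [zero_lt_orderTop_iff hx0]
      by_contra hcon
      exact coeff_order_eq_zero.not.2 hx0 (hxc _ (not_lt.1 hcon))
  obtain ⟨f, hf, hinv⟩ := exists_geom_inv hx0
  have hfm : f.hsum ∈ TT z := by
    intro g
    rw [coeff_hsum_eq_sum]
    have : ∀ n, ∃ r : ℂ, (f n).coeff g = r • cc z g := by
      intro n; rw [hf]; exact pow_mem hxm n g
    choose r hr using this
    refine ⟨∑ i ∈ (f.coeff g).support, r i, ?_⟩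
    rw [Finset.sum_smul]
    exact Finset.sum_congr rfl fun i _ => hr i
  refine ⟨f.hsum * p, mul_mem hfm hpm, ?_⟩
  have h1 : p * (s * f.hsum) = 1 := by
    rw [← mul_assoc, ← hinv, hx, sub_sub_cancel]
  have h2 : s * f.hsum = l := by
    calc s * f.hsum = (l * p) * (s * f.hsum) := by rw [hlp, one_mul]
      _ = l := by rw [mul_assoc, h1, mul_one]
  rw [← mul_assoc, h2, hlp]


theorem TT_nontriv (z : ℂˣ) : Nontrivial (TT z) := ⟨0, 1, by
    intro h
    have := congrArg (fun s : TT z => (s : HS).coeff 0) h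
    simp at this⟩

theorem unit_of_right_inv {S : Type*} [Ring S] [Nontrivial S]
    (key : ∀ s : S, s ≠ 0 → ∃ t : S, s * t = 1) (s : S) : IsUnit s ∨ s = 0 := by
  by_cases hs : s = 0
  · exact Or.inr hs
  left
  obtain ⟨t, ht⟩ := key s hs
  have ht0 : t ≠ 0 := by rintro rfl; simp at ht
  obtain ⟨r, hr⟩ := key t ht0
  have : r = s := by
    calc r = (s * t) * r := by rw [ht, one_mul]
      _ = s := by rw [mul_assoc, hr, mul_one]
  exact ⟨⟨s, t, ht, by rw [← this]; exact hr⟩, rfl⟩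

theorem TT_unit (z : ℂˣ) (s : TT z) : IsUnit s ∨ s = 0 := by
  have := TT_nontriv z
  refine unit_of_right_inv (fun s hs => ?_) s
  obtain ⟨t, ht, h⟩ := TT_inv z s s.2 (fun h => hs (Subtype.ext h))
  exact ⟨⟨t, ht⟩, Subtype.ext h⟩

noncomputable def mon (z : ℂˣ) (g : Gam) (r : ℂ) : TT z := ⟨single g (r • cc z g), single_mem z g r⟩

theorem mon_mul (z : ℂˣ) (g h : Gam) (r q : ℂ) :
    mon z g r * mon z h q = mon z (g + h) (r * q * chi z h g) := by
  apply Subtype.ext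
  simp only [mon, Subring.coe_mul, single_mul_single, smul_mul_smul_comm, cc_mul, smul_smul]

theorem mon_one (z : ℂˣ) : mon z 0 1 = 1 := by
  apply Subtype.ext
  simp only [mon, cc_zero, one_smul, single_zero_one, Subring.coe_one]

theorem mon_pow (z : ℂˣ) (g : Gam) (r : ℂ) (n : ℕ) :
    ∃ q, mon z g r ^ n = mon z (n • g) q := by
  induction n with
  | zero => exact ⟨1, by rw [pow_zero, zero_smul, mon_one]⟩
  | succ n ih =>
    obtain ⟨q, hq⟩ := ih
    exact ⟨_, by rw [pow_succ, hq, mon_mul, succ_nsmul]⟩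

theorem mon_inj (z : ℂˣ) (g h : Gam) (r q : ℂ) (hr : r ≠ 0) (e : mon z g r = mon z h q) :
    g = h ∧ r = q := by
  have e1 : (single g (r • cc z g) : HS) = single h (q • cc z h) := congrArg Subtype.val e
  have e2 := congrArg (fun s : HS => s.coeff g) e1
  simp only [coeff_single_same, coeff_single] at e2
  split_ifs at e2 with hh
  · subst hh
    exact ⟨rfl, smul_left_injective ℂ (cc_ne z g) e2⟩
  · exact absurd e2 (smul_ne_zero hr (cc_ne z g))

theorem mon_ne (z : ℂˣ) (g : Gam) (r : ℂ) (hr : r ≠ 0) : mon z g r ≠ 0 := by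
  intro h
  have h0 : mon z g 0 = 0 := by apply Subtype.ext; simp [mon]
  rw [← h0] at h
  exact hr (mon_inj z g g r 0 hr h).2

theorem mon_scal_comm (z : ℂˣ) (r : ℂ) (s : TT z) : Commute (mon z 0 r) s := by
  apply Subtype.ext
  ext1
  ext1 g
  simp [mon, cc_zero, coeff_single_zero_mul, coeff_mul_single_zero]

theorem mon_comm_of (z : ℂˣ) (g : Gam) (r : ℂ) (h : ∀ h, chi z g h = chi z h g) (s : TT z) :
    Commute (mon z g r) s := by
  apply Subtype.ext
  ext1
  ext1 x
  simp only [mon, Subring.coe_mul, coeff_single_mul, coeff_mul_single]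
  obtain ⟨q, hq⟩ := s.2 (x - g)
  rw [hq, smul_mul_smul_comm, smul_mul_smul_comm, cc_mul, cc_mul, h, add_comm, mul_comm q]

theorem chi_nsmul_left (z : ℂˣ) (m : ℕ) (g h) : chi z (m • g) h = chi z g h ^ m := by
  induction m with
  | zero => simp [chi, Bf_zero_left]
  | succ m ih => rw [succ_nsmul, chi_add_left, ih, pow_succ]

theorem chi_nsmul_right (z : ℂˣ) (m : ℕ) (g h) : chi z h (m • g) = chi z h g ^ m := by
  induction m with
  | zero => simp [chi, Bf_zero_right]
  | succ m ih => rw [succ_nsmul, chi_add_right, ih, pow_succ]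

theorem mon_nat (z : ℂˣ) (m : ℕ) : mon z 0 (m : ℂ) = (m : TT z) := by
  induction m with
  | zero => apply Subtype.ext; simp [mon]
  | succ m ih =>
    rw [Nat.cast_succ (R := TT z), ← ih, ← mon_one]
    apply Subtype.ext
    simp [mon, add_smul]

theorem exists_QData (n : ℕ) (h1 : 1 ≤ n) :
    ∃ (K : Type) (_ : DivisionRing K), Nonempty (QData n K) := by
  suffices h : ∃ z : ℂˣ, Nonempty (QData n (TT z)) by
    obtain ⟨z, h⟩ := h
    have := TT_nontriv z
    exact ⟨TT z, DivisionRing.ofIsUnitOrEqZero (TT_unit z), h⟩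
  have hprim := Complex.isPrimitiveRoot_exp n (by omega)
  obtain ⟨z, hz⟩ : ∃ z : ℂˣ, IsPrimitiveRoot z n := by
    obtain ⟨z, hz⟩ := hprim.isUnit (by omega)
    exact ⟨z, by rw [← IsPrimitiveRoot.coe_units_iff, hz]; exact hprim⟩
  have hzpow : ∀ (r : ℂ) (m : ℕ), mon z 0 r ^ m = mon z 0 (r ^ m) := by
    intro r m
    induction m with
    | zero => simp [mon_one]
    | succ m ih => rw [pow_succ, ih, mon_mul]; simp [chi, Bf_zero_left, pow_succ]
  have hcomm : ∀ i j, Bf (eg i) (eg j) = Bf (eg j) (eg i) →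
      Commute (mon z (eg i) 1) (mon z (eg j) 1) := by
    intro i j h
    change _ * _ = _ * _
    rw [mon_mul, mon_mul, add_comm]
    simp only [chi, h]
  refine ⟨z, ⟨{
    z := mon z 0 z
    a := fun i => mon z (eg (2 * i)) 1
    b := fun i => mon z (eg (2 * i + 1)) 1
    zc := fun x => mon_scal_comm z _ x
    zn := ?_
    zp := ?_
    hn := ?_
    ha := fun i => mon_ne _ _ _ one_ne_zero
    hb := fun i => mon_ne _ _ _ one_ne_zero
    ba := ?_
    aa := ?_
    bb := ?_
    ab := ?_
    bn := ?_
    ne1 := ?_ }⟩⟩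
  · rw [hzpow, ← Units.val_pow_eq_pow_val, hz.pow_eq_one, Units.val_one, mon_one]
  · intro t ht htn
    rw [hzpow, ← Units.val_pow_eq_pow_val, ← mon_one]
    intro h
    have := (mon_inj _ _ _ _ _ (Units.ne_zero _) h).2
    exact hz.pow_ne_one_of_pos_of_lt (by omega) htn (Units.ext this)
  · rw [← mon_nat]
    exact mon_ne _ _ _ (by exact_mod_cast (by omega : n ≠ 0))
  · intro i
    rw [mon_mul, mon_mul, mon_mul, zero_add, add_comm]
    simp [chi, Bf_zero_left, Bf_zero_right, Bf_eg]
  · intro i j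
    apply hcomm
    simp only [Bf_eg]
    rw [if_neg (by omega), if_neg (by omega)]
  · intro i j
    apply hcomm
    simp only [Bf_eg]
    rw [if_neg (by rw [← Nat.not_odd_iff_even]; intro h; exact h.1 ⟨i, rfl⟩),
      if_neg (by rw [← Nat.not_odd_iff_even]; intro h; exact h.1 ⟨j, rfl⟩)]
  · intro i j hij
    apply hcomm
    simp only [Bf_eg]
    rw [if_neg (by omega),
      if_neg (by rw [← Nat.not_odd_iff_even]; intro h; exact h.1 ⟨j, rfl⟩)]
  · intro i x
    obtain ⟨q, hq⟩ := mon_pow z (eg (2 * i + 1)) 1 n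
    rw [hq]
    apply mon_comm_of
    intro h
    rw [chi_nsmul_left, chi_nsmul_right, chi_pow z n hz.pow_eq_one, chi_pow z n hz.pow_eq_one]
  · intro i h
    obtain ⟨q, hq⟩ := mon_pow z (eg (2 * i + 1)) 1 n
    obtain ⟨q', hq'⟩ := mon_pow z (eg (2 * (i + 1))) 1 n
    obtain ⟨q2, hq2⟩ := mon_pow z (n • eg (2 * i + 1) + n • eg (2 * (i + 1)))
      (q * q' * chi z (n • eg (2 * (i + 1))) (n • eg (2 * i + 1))) 2
    rw [hq, hq', mon_mul, hq2, ← mon_one] at h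
    have h2 := (mon_inj _ _ _ _ _ one_ne_zero h.symm).1
    have h3 : (0 : ℕ →₀ ℤ) (2 * i + 1) = (2 • (n • Finsupp.single (2 * i + 1) 1 +
      n • Finsupp.single (2 * (i + 1)) 1) : ℕ →₀ ℤ) (2 * i + 1) :=
      DFunLike.congr_fun (congrArg ofLex h2) (2 * i + 1)
    have h4 : ¬ (2 * (i + 1) = 2 * i + 1) := by omega
    simp [Finsupp.single_apply, h4] at h3
    omega

end Model

section Local

variable {K : Type*} [DivisionRing K]

def trr (n : ℕ) (u x : K) : K := ∑ k ∈ Finset.range n, u ^ k * x * (u ^ k)⁻¹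

theorem trr_mul_left (n : ℕ) (u x c : K) (h : Commute c u) : trr n u (c * x) = c * trr n u x := by
  unfold trr
  rw [Finset.mul_sum]
  refine Finset.sum_congr rfl fun k _ => ?_
  rw [← mul_assoc, ← (h.pow_right k).eq]
  simp only [mul_assoc]

theorem trr_mul_right (n : ℕ) (u x c : K) (h : Commute c u) : trr n u (x * c) = trr n u x * c := by
  unfold trr
  rw [Finset.sum_mul]
  refine Finset.sum_congr rfl fun k _ => ?_
  have := ((h.pow_right k).inv_right₀).eq
  simp only [mul_assoc]
  rw [this]

theorem trr_add (n : ℕ) (u x y : K) : trr n u (x + y) = trr n u x + trr n u y := by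
  unfold trr
  rw [← Finset.sum_add_distrib]
  refine Finset.sum_congr rfl fun k _ => ?_
  rw [mul_add, add_mul]

theorem trr_sum (n : ℕ) (u : K) {ι : Type*} (s : Finset ι) (f : ι → K) :
    trr n u (∑ i ∈ s, f i) = ∑ i ∈ s, trr n u (f i) := by
  unfold trr
  rw [Finset.sum_comm]
  refine Finset.sum_congr rfl fun k _ => ?_
  rw [Finset.mul_sum, Finset.sum_mul]

theorem trr_comm (n : ℕ) (u x c : K) (h : Commute c u) (hx : Commute c x) :
    Commute c (trr n u x) := by
  unfold trr
  refine Commute.sum_right _ _ _ fun k _ => ?_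
  exact ((h.pow_right k).mul_right hx).mul_right ((h.pow_right k).inv_right₀)

theorem trr_comm_self (n : ℕ) (u x : K) (hu : u ≠ 0) (h : ∀ y, Commute (u ^ n) y) :
    Commute u (trr n u x) := by
  have key : u * trr n u x * u⁻¹ = trr n u x := by
    unfold trr
    rw [Finset.mul_sum, Finset.sum_mul]
    have : ∀ k, u * (u ^ k * x * (u ^ k)⁻¹) * u⁻¹ = u ^ (k + 1) * x * (u ^ (k + 1))⁻¹ := by
      intro k
      rw [pow_succ' u k, mul_inv_rev]
      simp only [mul_assoc]
    simp only [this]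
    have e := Finset.sum_range_succ' (fun k => u ^ k * x * (u ^ k)⁻¹) n
    rw [Finset.sum_range_succ] at e
    have h1 : u ^ n * x * (u ^ n)⁻¹ = x := by
      rw [(h x).eq, mul_assoc, mul_inv_cancel₀ (pow_ne_zero _ hu), mul_one]
    rw [h1] at e
    simp only [pow_zero, one_mul, inv_one, mul_one] at e
    exact (add_right_cancel e).symm
  calc u * trr n u x = u * trr n u x * u⁻¹ * u := by
        rw [mul_assoc _ u⁻¹, inv_mul_cancel₀ hu, mul_one]
    _ = trr n u x * u := by rw [key]

theorem trr_eigen (n : ℕ) (u x c : K) (hu : u ≠ 0) (hc : ∀ y, Commute c y)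
    (hx : u * x = c * x * u) : trr n u x = (∑ k ∈ Finset.range n, c ^ k) * x := by
  unfold trr
  rw [Finset.sum_mul]
  refine Finset.sum_congr rfl fun k hk => ?_
  clear hk
  have : u ^ k * x = c ^ k * x * u ^ k := by
    induction k with
    | zero => simp
    | succ k ih =>
      rw [pow_succ' u, mul_assoc, ih, mul_assoc, ← mul_assoc u, ← ((hc u).pow_left k).eq,
        mul_assoc, ← mul_assoc u x, hx, pow_succ c]
      simp only [mul_assoc]
  rw [this, mul_assoc, mul_inv_cancel₀ (pow_ne_zero _ hu), mul_one]

theorem geom_zero (n : ℕ) (c : K) (h1 : c ^ n = 1) (hc : c ≠ 1) :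
    ∑ k ∈ Finset.range n, c ^ k = 0 := by
  have := mul_geom_sum c n
  rw [h1, sub_self] at this
  rcases mul_eq_zero.1 this with h | h
  · exact absurd (sub_eq_zero.1 h) hc
  · exact h

/-- central primitive root -/
structure CRoot (n : ℕ) (z : K) : Prop where
  c : ∀ x, Commute z x
  zn : z ^ n = 1
  zp : ∀ t, 0 < t → t < n → z ^ t ≠ 1
  hn : (n : K) ≠ 0

theorem CRoot.ne {n : ℕ} {z : K} (h : CRoot n z) : z ≠ 0 := by
  rintro rfl
  have h1 := h.zn
  have : n ≠ 0 := by rintro rfl; exact h.hn (by simp)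
  rw [zero_pow this] at h1
  exact zero_ne_one h1

theorem CRoot.inj {n : ℕ} {z : K} (h : CRoot n z) (i j : ℕ) (hi : i < n) (hj : j < n)
    (e : z ^ i = z ^ j) : i = j := by
  wlog hij : i ≤ j generalizing i j
  · exact (this j i hj hi e.symm (by omega)).symm
  by_contra hne
  obtain ⟨t, rfl⟩ := Nat.exists_eq_add_of_le hij
  rw [pow_add] at e
  have : z ^ t = 1 := (mul_left_cancel₀ (pow_ne_zero i h.ne) (by rw [mul_one]; exact e)).symm
  exact h.zp t (by omega) (by omega) this

theorem CRoot.nc {n : ℕ} {z : K} (_ : CRoot n z) (x : K) : Commute (n : K) x := Nat.cast_commute n x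

theorem trr_pow {n : ℕ} {z : K} (h : CRoot n z) (v d : K) (hv : v ≠ 0) (hd : d ≠ 0)
    (e : v * d = z * (d * v)) (i j : ℕ) (hi : i < n) (hj : j < n) :
    trr n v (d ^ i * (d ^ j)⁻¹) = if i = j then (n : K) else 0 := by
  have e1 : ∀ i, v * d ^ i = z ^ i * d ^ i * v := by
    intro i
    induction i with
    | zero => simp
    | succ k ih =>
      rw [pow_succ d, ← mul_assoc, ih, mul_assoc, e, pow_succ z]
      rw [← mul_assoc, mul_assoc (z ^ k), ← ((h.c (d ^ k))).eq]
      simp only [mul_assoc]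
  have e2 : v * (d ^ j)⁻¹ = (z ^ j)⁻¹ * (d ^ j)⁻¹ * v := by
    have hz := pow_ne_zero j h.ne
    have hdj := pow_ne_zero j hd
    have := e1 j
    have c1 : Commute (z ^ j) (d ^ j) := (h.c _).pow_left j
    have c2 : Commute (z ^ j)⁻¹ (d ^ j)⁻¹ := (c1.inv_left₀).inv_right₀
    rw [c2.eq, mul_assoc, eq_inv_mul_iff_mul_eq₀ hdj, eq_comm, inv_mul_eq_iff_eq_mul₀ hz,
      ← mul_assoc, ← mul_assoc, ← this, mul_assoc, mul_inv_cancel₀ hdj, mul_one]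
  set c := z ^ i * (z ^ j)⁻¹ with hc
  have hcc : ∀ y, Commute c y := fun y =>
    ((h.c y).pow_left i).mul_left (((h.c y).pow_left j).inv_left₀)
  have hx : v * (d ^ i * (d ^ j)⁻¹) = c * (d ^ i * (d ^ j)⁻¹) * v := by
    rw [← mul_assoc, e1, mul_assoc (z ^ i * d ^ i), e2, hc]
    have c3 : Commute (d ^ i) (z ^ j)⁻¹ := (((h.c (d ^ i)).pow_left j).inv_left₀).symm
    rw [← mul_assoc, ← mul_assoc, mul_assoc (z ^ i), c3.eq]
    simp only [mul_assoc]
  rw [trr_eigen n v _ c hv hcc hx]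
  split_ifs with hij
  · subst hij
    rw [hc, mul_inv_cancel₀ (pow_ne_zero _ h.ne), mul_inv_cancel₀ (pow_ne_zero _ hd)]
    simp
  · rw [geom_zero, zero_mul]
    · rw [hc, Commute.mul_pow (((h.c _).pow_left i)), inv_pow, ← pow_mul, ← pow_mul, mul_comm i,
        mul_comm j, pow_mul, pow_mul, h.zn, one_pow, one_pow, inv_one, mul_one]
    · intro h1
      rw [hc, mul_inv_eq_one₀ (pow_ne_zero _ h.ne)] at h1
      exact hij (h.inj i j hi hj h1)

end Local

section Step

variable {K : Type*} [DivisionRing K]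

structure Stp (n : ℕ) (z u d v : K) : Prop where
  hr : CRoot n z
  hu : u ≠ 0
  hd : d ≠ 0
  hv : v ≠ 0
  ud : Commute u d
  uv : Commute u v
  vd : v * d = z * (d * v)
  un : ∀ y, Commute (u ^ n) y
  ne : (u ^ n * d ^ n) ^ 2 ≠ 1

def SQ (u d : K) : K := 1 + u * d
def Sth (u d : K) : K := -(u * d)
def SDel (n : ℕ) (u d : K) : K := 1 - Sth u d ^ n
def Sw (n : ℕ) (u d : K) : K :=
  (n : K)⁻¹ * SDel n u d * ∑ s ∈ Finset.range n, (Sth u d ^ s)⁻¹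

namespace Stp

variable {n : ℕ} {z u d v : K} (h : Stp n z u d v)
include h

theorem th_pow (m : ℕ) : Sth u d ^ m = (-1) ^ m * (u ^ m * d ^ m) := by
  rw [Sth, neg_pow, h.ud.mul_pow]

theorem th_ne : Sth u d ≠ 0 := neg_ne_zero.2 (mul_ne_zero h.hu h.hd)

theorem thn_ne : Sth u d ^ n ≠ 1 := by
  intro e
  apply h.ne
  rw [← h.ud.mul_pow, ← pow_mul, mul_comm, pow_mul, ← neg_sq, ← pow_mul, mul_comm, pow_mul]
  change (Sth u d ^ n) ^ 2 = 1
  rw [e, one_pow]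

theorem Del_ne : SDel n u d ≠ 0 := sub_ne_zero.2 h.thn_ne.symm

theorem SQ_eq : SQ u d = 1 - Sth u d := by simp [SQ, Sth]

theorem Q_mul : SQ u d * ∑ m ∈ Finset.range n, Sth u d ^ m = SDel n u d := by
  rw [h.SQ_eq, mul_neg_geom_sum, SDel]

theorem Q_ne : SQ u d ≠ 0 := by
  intro e
  have := h.Q_mul
  rw [e, zero_mul] at this
  exact h.Del_ne this.symm

theorem Del_comm_of (y : K) (hy : Commute y d) : Commute (SDel n u d) y := by
  rw [SDel, h.th_pow]
  refine (Commute.one_left y).sub_left ?_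
  exact ((Commute.neg_one_left y).pow_left n).mul_left
    ((h.un y).mul_left ((hy.pow_right n).symm))

theorem Del_comm_v : Commute (SDel n u d) v := by
  rw [SDel, h.th_pow]
  refine (Commute.one_left v).sub_left ?_
  refine ((Commute.neg_one_left v).pow_left n).mul_left ((h.un v).mul_left ?_)
  have : ∀ m, v * d ^ m = z ^ m * (d ^ m * v) := by
    intro m
    induction m with
    | zero => simp
    | succ k ih =>
      rw [pow_succ d, ← mul_assoc, ih, mul_assoc, mul_assoc, h.vd, pow_succ z,
        ← mul_assoc (d ^ k) z, ← (h.hr.c (d ^ k)).eq]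
      simp only [mul_assoc]
  have e := this n
  rw [h.hr.zn, one_mul] at e
  exact e.symm

theorem Q_comm_Del : Commute (SQ u d) (SDel n u d) := by
  rw [h.SQ_eq, SDel]
  have : Commute (1 - Sth u d) (Sth u d) := (Commute.one_left _).sub_left (Commute.refl _)
  exact (Commute.one_right _).sub_right (this.pow_right n)

theorem Q_inv : (SQ u d)⁻¹ = (SDel n u d)⁻¹ * ∑ m ∈ Finset.range n, Sth u d ^ m := by
  rw [inv_eq_iff_eq_inv, eq_comm]
  apply inv_eq_of_mul_eq_one_left
  rw [← mul_assoc, (h.Q_comm_Del.inv_right₀).eq, mul_assoc, h.Q_mul, inv_mul_cancel₀ h.Del_ne]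

theorem w_mul : Sw n u d * (1 - (Sth u d)⁻¹) = (n : K)⁻¹ * SDel n u d * (1 - (Sth u d ^ n)⁻¹) := by
  rw [Sw, mul_assoc]
  congr 1
  simp only [← inv_pow]
  rw [geom_sum_mul_neg]

theorem w_ne : Sw n u d ≠ 0 := by
  intro e
  have := h.w_mul
  rw [e, zero_mul] at this
  have h2 : (1 - (Sth u d ^ n)⁻¹) ≠ 0 := by
    rw [sub_ne_zero]
    intro e
    exact h.thn_ne (by rw [← inv_inv (Sth u d ^ n), ← e, inv_one])
  exact mul_ne_zero (mul_ne_zero (inv_ne_zero h.hr.hn) h.Del_ne) h2 this.symm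

theorem nu_w (m : ℕ) (hm : m < n) :
    trr n v (d ^ m * Sw n u d) = SDel n u d * ((-1) ^ m * (u ^ m)⁻¹) := by
  have e : d ^ m * Sw n u d = ∑ s ∈ Finset.range n,
      ((n : K)⁻¹ * SDel n u d * ((-1) ^ s * (u ^ s)⁻¹)) * (d ^ m * (d ^ s)⁻¹) := by
    rw [Sw, Finset.mul_sum, Finset.mul_sum]
    refine Finset.sum_congr rfl fun s _ => ?_
    have c1 : Commute (d ^ m) ((n : K)⁻¹ * SDel n u d) :=
      ((h.hr.nc _).symm.inv_right₀).mul_right (h.Del_comm_of _ ((Commute.refl d).pow_left m)).symm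
    have c2 : Commute (d ^ m) ((-1) ^ s * (u ^ s)⁻¹) :=
      ((Commute.neg_one_right _).pow_right s).mul_right
        (((h.ud.symm.pow_left m).pow_right s).inv_right₀)
    rw [h.th_pow, mul_inv_rev, mul_inv_rev, ← mul_assoc, c1.eq,
      mul_assoc ((n : K)⁻¹ * SDel n u d), mul_assoc ((n : K)⁻¹ * SDel n u d)]
    congr 1
    have e3 : (((-1 : K)) ^ s)⁻¹ = (-1) ^ s := by
      rw [← inv_pow, inv_neg, inv_one]
    have c3 : Commute ((-1 : K) ^ s) (d ^ s)⁻¹ := (Commute.neg_one_left _).pow_left s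
    have c4 : Commute ((u ^ s)⁻¹) (d ^ s)⁻¹ :=
      (((h.ud.pow_left s).pow_right s).inv_left₀).inv_right₀
    have c5 : Commute ((-1 : K) ^ s) (u ^ s)⁻¹ := (Commute.neg_one_left _).pow_left s
    rw [e3, ← c4.eq, mul_assoc, ← c3.eq, ← mul_assoc (u ^ s)⁻¹, ← c5.eq, ← mul_assoc (d ^ m), c2.eq,
      mul_assoc]
  rw [e, trr_sum]
  have cv : ∀ s, Commute ((n : K)⁻¹ * SDel n u d * ((-1) ^ s * (u ^ s)⁻¹)) v := fun s =>
    (((h.hr.nc v).inv_left₀).mul_left h.Del_comm_v).mul_left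
      (((Commute.neg_one_left v).pow_left s).mul_left ((h.uv.pow_left s).inv_left₀))
  rw [Finset.sum_eq_single m]
  · rw [trr_mul_left _ _ _ _ (cv m), trr_pow h.hr v d h.hv h.hd h.vd m m hm hm, if_pos rfl,
      ← (h.hr.nc _).eq, mul_assoc ((n : K)⁻¹), ← mul_assoc, mul_inv_cancel₀ h.hr.hn, one_mul]
  · intro s hs hsm
    rw [trr_mul_left _ _ _ _ (cv s), trr_pow h.hr v d h.hv h.hd h.vd m s hm (Finset.mem_range.1 hs),
      if_neg (Ne.symm hsm), mul_zero]
  · intro hm'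
    exact absurd (Finset.mem_range.2 hm) hm'

theorem conj_pow (k : ℕ) : (SQ u d * v * (SQ u d)⁻¹) ^ k = SQ u d * v ^ k * (SQ u d)⁻¹ := by
  have hQ := h.Q_ne
  induction k with
  | zero => simp [mul_inv_cancel₀ hQ]
  | succ k ih =>
    rw [pow_succ, ih, pow_succ]
    simp only [mul_assoc]
    rw [← mul_assoc (SQ u d)⁻¹ (SQ u d), inv_mul_cancel₀ hQ, one_mul]

theorem key (f : K) (fd : Commute f d) (fv : Commute f v) :
    trr n (SQ u d * v * (SQ u d)⁻¹) (f * Sw n u d * (SQ u d)⁻¹) = trr n u f := by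
  have hQ := h.Q_ne
  have e1 : trr n (SQ u d * v * (SQ u d)⁻¹) (f * Sw n u d * (SQ u d)⁻¹) =
      SQ u d * trr n v ((SQ u d)⁻¹ * (f * Sw n u d)) * (SQ u d)⁻¹ := by
    unfold trr
    rw [Finset.mul_sum, Finset.sum_mul]
    refine Finset.sum_congr rfl fun k _ => ?_
    rw [h.conj_pow, mul_inv_rev, mul_inv_rev, inv_inv]
    simp only [mul_assoc]
    rw [← mul_assoc (SQ u d)⁻¹ (SQ u d), inv_mul_cancel₀ hQ, one_mul]
  have cD : Commute (SDel n u d) f := h.Del_comm_of f fd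
  have cDu : Commute (SDel n u d) u := h.Del_comm_of u h.ud
  have e2 : (SQ u d)⁻¹ * (f * Sw n u d) = ∑ m ∈ Finset.range n,
      ((SDel n u d)⁻¹ * ((-1) ^ m * u ^ m * f)) * (d ^ m * Sw n u d) := by
    rw [h.Q_inv, mul_assoc, Finset.sum_mul, Finset.mul_sum]
    refine Finset.sum_congr rfl fun m _ => ?_
    rw [h.th_pow]
    simp only [mul_assoc]
    rw [← mul_assoc (d ^ m) f, ← (fd.pow_right m).eq, mul_assoc]
  have e3 : trr n v ((SQ u d)⁻¹ * (f * Sw n u d)) = trr n u f := by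
    rw [e2, trr_sum]
    change _ = ∑ k ∈ Finset.range n, u ^ k * f * (u ^ k)⁻¹
    refine Finset.sum_congr rfl fun m hm => ?_
    have cv : Commute ((SDel n u d)⁻¹ * ((-1) ^ m * u ^ m * f)) v :=
      (h.Del_comm_v.inv_left₀).mul_left
        ((((Commute.neg_one_left v).pow_left m).mul_left (h.uv.pow_left m)).mul_left fv)
    rw [trr_mul_left _ _ _ _ cv, h.nu_w m (Finset.mem_range.1 hm)]
    have c1 : Commute (SDel n u d) ((-1) ^ m * u ^ m * f) :=
      (((Commute.neg_one_right _).pow_right m).mul_right (cDu.pow_right m)).mul_right cD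
    have c2 : Commute ((-1 : K) ^ m) (u ^ m * f) := (Commute.neg_one_left _).pow_left m
    rw [mul_assoc, ← mul_assoc _ (SDel n u d), ← c1.eq, mul_assoc, ← mul_assoc (SDel n u d)⁻¹,
      inv_mul_cancel₀ h.Del_ne, one_mul, mul_assoc ((-1) ^ m), c2.eq, mul_assoc,
      ← mul_assoc ((-1) ^ m)]
    have e4 : (-1 : K) ^ m * (-1) ^ m = 1 := by
      rw [← pow_add, ← two_mul, pow_mul]; simp
    rw [e4, one_mul]
  have cd : Commute d (trr n u f) := trr_comm n u f d h.ud.symm fd.symm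
  have cu : Commute u (trr n u f) := trr_comm_self n u f h.hu h.un
  have cQ : Commute (SQ u d) (trr n u f) := (Commute.one_left _).add_left (cu.mul_left cd)
  rw [e1, e3, cQ.eq, mul_assoc, mul_inv_cancel₀ hQ, mul_one]

end Stp

end Step


section Tower

variable {n : ℕ} {K : Type} [DivisionRing K]

def subOf (P : K → Prop) (h1 : P 1) (hm : ∀ x y, P x → P y → P (x * y))
    (ha : ∀ x y, P x → P y → P (x + y)) (hn : ∀ x, P x → P (-x)) (hi : ∀ x, P x → P x⁻¹) :
    Subfield K where
  carrier := {x | P x}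
  one_mem' := h1
  mul_mem' := fun {x y} hx hy => hm x y hx hy
  add_mem' := fun {x y} hx hy => ha x y hx hy
  zero_mem' := by
    have := ha 1 (-1) h1 (hn 1 h1)
    rw [add_neg_cancel] at this
    exact this
  neg_mem' := fun {x} hx => hn x hx
  inv_mem' := fun x hx => hi x hx

/-- centralizer of a set -/
def cenS (S : Set K) : Subfield K :=
  subOf (fun x => ∀ s ∈ S, Commute s x) (fun s _ => Commute.one_right s)
    (fun _ _ hx hy s hs => (hx s hs).mul_right (hy s hs))
    (fun _ _ hx hy s hs => (hx s hs).add_right (hy s hs))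
    (fun _ hx s hs => (hx s hs).neg_right)
    (fun _ hx s hs => (hx s hs).inv_right₀)

theorem mem_cenS {S : Set K} {x : K} : x ∈ cenS S ↔ ∀ s ∈ S, Commute s x := Iff.rfl

def unionS (A : ℕ → Subfield K) (hA : Monotone A) : Subfield K :=
  subOf (fun x => ∃ N, x ∈ A N) ⟨0, one_mem _⟩
    (fun _ _ ⟨N, hx⟩ ⟨M, hy⟩ => ⟨max N M, mul_mem (hA (le_max_left _ _) hx)
      (hA (le_max_right _ _) hy)⟩)
    (fun _ _ ⟨N, hx⟩ ⟨M, hy⟩ => ⟨max N M, add_mem (hA (le_max_left _ _) hx)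
      (hA (le_max_right _ _) hy)⟩)
    (fun _ ⟨N, hx⟩ => ⟨N, neg_mem hx⟩)
    (fun _ ⟨N, hx⟩ => ⟨N, inv_mem hx⟩)

theorem mem_unionS {A : ℕ → Subfield K} {hA : Monotone A} {x : K} :
    x ∈ unionS A hA ↔ ∃ N, x ∈ A N := Iff.rfl

/-- conjugate subfield `c S c⁻¹` -/
def conjS (c : K) (hc : c ≠ 0) (S : Subfield K) : Subfield K :=
  subOf (fun x => c⁻¹ * x * c ∈ S)
    (by rw [mul_one, inv_mul_cancel₀ hc]; exact one_mem _)
    (fun x y hx hy => by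
      have e : c⁻¹ * (x * y) * c = (c⁻¹ * x * c) * (c⁻¹ * y * c) := by
        simp only [mul_assoc]; rw [mul_inv_cancel_left₀ hc]
      rw [e]; exact mul_mem hx hy)
    (fun x y hx hy => by rw [mul_add, add_mul]; exact add_mem hx hy)
    (fun x hx => by rw [mul_neg, neg_mul]; exact neg_mem hx)
    (fun x hx => by
      have e : c⁻¹ * x⁻¹ * c = (c⁻¹ * x * c)⁻¹ := by
        rw [mul_inv_rev, mul_inv_rev, inv_inv, mul_assoc]
      rw [e]; exact inv_mem hx)

theorem mem_conjS {c : K} {hc : c ≠ 0} {S : Subfield K} {x : K} :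
    x ∈ conjS c hc S ↔ c⁻¹ * x * c ∈ S := Iff.rfl

theorem elimL (S : Subfield K) (p q e f s1 s2 s3 s4 s5 s6 : K) (h1 : s1 ∈ S) (h2 : s2 ∈ S)
    (h3 : s3 ∈ S) (h4 : s4 ∈ S) (h5 : s5 ∈ S) (h6 : s6 ∈ S) (e1 : 1 = s1 * p + s2 * q)
    (e2 : e = s3 * p + s4 * q) (e3 : f = s5 * p + s6 * q) (he : e ∉ S) :
    ∃ g ∈ S, ∃ h ∈ S, f = g * e + h := by
  have main : (∃ g ∈ S, ∃ h ∈ S, p = g * e + h) ∧ (∃ g ∈ S, ∃ h ∈ S, q = g * e + h) := by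
    by_cases hs : s1 = 0
    · have hq : s2 * q = 1 := by rw [e1, hs, zero_mul, zero_add]
      have hqS : q ∈ S := by
        rw [← inv_eq_of_mul_eq_one_right hq]; exact inv_mem h2
      have hs3 : s3 ≠ 0 := by
        rintro rfl
        apply he
        rw [e2, zero_mul, zero_add]; exact mul_mem h4 hqS
      refine ⟨⟨s3⁻¹, inv_mem h3, -(s3⁻¹ * (s4 * q)),
        neg_mem (mul_mem (inv_mem h3) (mul_mem h4 hqS)), ?_⟩, 0, zero_mem _, q, hqS, by simp⟩
      rw [e2, mul_add, inv_mul_cancel_left₀ hs3, add_neg_cancel_right]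
    · have hp : p = s1⁻¹ * (1 - s2 * q) := by
        rw [e1, add_sub_cancel_right, inv_mul_cancel_left₀ hs]
      have he' : e = s3 * s1⁻¹ + (s4 - s3 * s1⁻¹ * s2) * q := by
        rw [e2, hp]; noncomm_ring
      set t := s4 - s3 * s1⁻¹ * s2 with ht
      have htS : t ∈ S := sub_mem h4 (mul_mem (mul_mem h3 (inv_mem h1)) h2)
      have ht0 : t ≠ 0 := by
        intro h0
        rw [h0, zero_mul, add_zero] at he'
        exact he (he' ▸ mul_mem h3 (inv_mem h1))
      have hq : q = t⁻¹ * e + (-(t⁻¹ * (s3 * s1⁻¹))) := by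
        rw [he', mul_add, inv_mul_cancel_left₀ ht0]; abel
      have hcS : -(t⁻¹ * (s3 * s1⁻¹)) ∈ S :=
        neg_mem (mul_mem (inv_mem htS) (mul_mem h3 (inv_mem h1)))
      refine ⟨⟨-(s1⁻¹ * s2 * t⁻¹), neg_mem (mul_mem (mul_mem (inv_mem h1) h2) (inv_mem htS)),
        s1⁻¹ - s1⁻¹ * s2 * (-(t⁻¹ * (s3 * s1⁻¹))),
        sub_mem (inv_mem h1) (mul_mem (mul_mem (inv_mem h1) h2) hcS), ?_⟩,
        t⁻¹, inv_mem htS, _, hcS, hq⟩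
      conv_lhs => rw [hp, hq]
      noncomm_ring
  obtain ⟨⟨g1, hg1, k1, hk1, ep⟩, g2, hg2, k2, hk2, eq⟩ := main
  refine ⟨s5 * g1 + s6 * g2, add_mem (mul_mem h5 hg1) (mul_mem h6 hg2), s5 * k1 + s6 * k2,
    add_mem (mul_mem h5 hk1) (mul_mem h6 hk2), ?_⟩
  conv_lhs => rw [e3, ep, eq]
  noncomm_ring

theorem elimR (S : Subfield K) (p q e f s1 s2 s3 s4 s5 s6 : K) (h1 : s1 ∈ S) (h2 : s2 ∈ S)
    (h3 : s3 ∈ S) (h4 : s4 ∈ S) (h5 : s5 ∈ S) (h6 : s6 ∈ S) (e1 : 1 = p * s1 + q * s2)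
    (e2 : e = p * s3 + q * s4) (e3 : f = p * s5 + q * s6) (he : e ∉ S) :
    ∃ g ∈ S, ∃ h ∈ S, f = e * g + h := by
  have main : (∃ g ∈ S, ∃ h ∈ S, p = e * g + h) ∧ (∃ g ∈ S, ∃ h ∈ S, q = e * g + h) := by
    by_cases hs : s1 = 0
    · have hq : q * s2 = 1 := by rw [e1, hs, mul_zero, zero_add]
      have hqS : q ∈ S := by
        rw [← inv_eq_of_mul_eq_one_left hq]; exact inv_mem h2
      have hs3 : s3 ≠ 0 := by
        rintro rfl
        apply he
        rw [e2, mul_zero, zero_add]; exact mul_mem hqS h4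
      refine ⟨⟨s3⁻¹, inv_mem h3, -(q * s4 * s3⁻¹),
        neg_mem (mul_mem (mul_mem hqS h4) (inv_mem h3)), ?_⟩, 0, zero_mem _, q, hqS, by simp⟩
      rw [e2, add_mul, mul_inv_cancel_right₀ hs3, add_neg_cancel_right]
    · have hp : p = (1 - q * s2) * s1⁻¹ := by
        rw [e1, add_sub_cancel_right, mul_inv_cancel_right₀ hs]
      have he' : e = s1⁻¹ * s3 + q * (s4 - s2 * s1⁻¹ * s3) := by
        rw [e2, hp]; noncomm_ring
      set t := s4 - s2 * s1⁻¹ * s3 with ht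
      have htS : t ∈ S := sub_mem h4 (mul_mem (mul_mem h2 (inv_mem h1)) h3)
      have ht0 : t ≠ 0 := by
        intro h0
        rw [h0, mul_zero, add_zero] at he'
        exact he (he' ▸ mul_mem (inv_mem h1) h3)
      have hq : q = e * t⁻¹ + (-(s1⁻¹ * s3 * t⁻¹)) := by
        rw [he', add_mul, mul_inv_cancel_right₀ ht0]; abel
      have hcS : -(s1⁻¹ * s3 * t⁻¹) ∈ S :=
        neg_mem (mul_mem (mul_mem (inv_mem h1) h3) (inv_mem htS))
      refine ⟨⟨-(t⁻¹ * s2 * s1⁻¹), neg_mem (mul_mem (mul_mem (inv_mem htS) h2) (inv_mem h1)),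
        s1⁻¹ - (-(s1⁻¹ * s3 * t⁻¹)) * s2 * s1⁻¹,
        sub_mem (inv_mem h1) (mul_mem (mul_mem hcS h2) (inv_mem h1)), ?_⟩,
        t⁻¹, inv_mem htS, _, hcS, hq⟩
      conv_lhs => rw [hp, hq]
      noncomm_ring
  obtain ⟨⟨g1, hg1, k1, hk1, ep⟩, g2, hg2, k2, hk2, eq⟩ := main
  refine ⟨g1 * s5 + g2 * s6, add_mem (mul_mem hg1 h5) (mul_mem hg2 h6), k1 * s5 + k2 * s6,
    add_mem (mul_mem hk1 h5) (mul_mem hk2 h6), ?_⟩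
  conv_lhs => rw [e3, ep, eq]
  noncomm_ring

end Tower


section Tower2

namespace QData

variable {n : ℕ} {K : Type} [DivisionRing K] (q : QData n K)

def FS (N : ℕ) : Subfield K := cenS {s | ∃ i, N < i ∧ (s = q.a i ∨ s = q.b i)}

theorem mem_FS {N : ℕ} {x : K} :
    x ∈ q.FS N ↔ ∀ i, N < i → Commute (q.a i) x ∧ Commute (q.b i) x := by
  constructor
  · intro h i hi
    exact ⟨h _ ⟨i, hi, Or.inl rfl⟩, h _ ⟨i, hi, Or.inr rfl⟩⟩
  · rintro h s ⟨i, hi, rfl | rfl⟩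
    exacts [(h i hi).1, (h i hi).2]

theorem FS_mono : Monotone q.FS := by
  intro N M hNM x hx
  rw [mem_FS] at *
  exact fun i hi => hx i (by omega)

theorem a_mem (i N : ℕ) (h : i ≤ N) : q.a i ∈ q.FS N := by
  rw [mem_FS]
  exact fun j hj => ⟨q.aa _ _, (q.ab _ _ (by omega)).symm⟩

theorem b_mem (i N : ℕ) (h : i ≤ N) : q.b i ∈ q.FS N := by
  rw [mem_FS]
  exact fun j hj => ⟨q.ab _ _ (by omega), q.bb _ _⟩

def u : ℕ → K
  | 0 => q.b 0
  | N + 1 => SQ (u N) (q.a (N + 1)) * q.b (N + 1) * (SQ (u N) (q.a (N + 1)))⁻¹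

def eps : ℕ → K
  | 0 => (n : K)⁻¹
  | N + 1 => eps N * Sw n (q.u N) (q.a (N + 1)) * (SQ (q.u N) (q.a (N + 1)))⁻¹

abbrev Q (N : ℕ) : K := SQ (q.u N) (q.a (N + 1))
abbrev w (N : ℕ) : K := Sw n (q.u N) (q.a (N + 1))

theorem u_succ (N : ℕ) : q.u (N + 1) = q.Q N * q.b (N + 1) * (q.Q N)⁻¹ := rfl
theorem eps_succ (N : ℕ) : q.eps (N + 1) = q.eps N * q.w N * (q.Q N)⁻¹ := rfl

theorem croot : CRoot n q.z := ⟨q.zc, q.zn, q.zp, q.hn⟩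

theorem stp_of (N : ℕ) (h1 : q.u N ∈ q.FS N) (h2 : q.u N ≠ 0) (h3 : q.u N ^ n = q.b N ^ n) :
    Stp n q.z (q.u N) (q.a (N + 1)) (q.b (N + 1)) where
  hr := q.croot
  hu := h2
  hd := q.ha _
  hv := q.hb _
  ud := ((q.mem_FS.1 h1) (N + 1) (by omega)).1.symm
  uv := ((q.mem_FS.1 h1) (N + 1) (by omega)).2.symm
  vd := q.ba _
  un := by rw [h3]; exact q.bn N
  ne := by rw [h3]; exact q.ne1 N

theorem Q_mem_of (N : ℕ) (h1 : q.u N ∈ q.FS N) : q.Q N ∈ q.FS (N + 1) :=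
  add_mem (one_mem _) (mul_mem (q.FS_mono (Nat.le_succ N) h1) (q.a_mem _ _ le_rfl))

theorem u_props (N : ℕ) : q.u N ∈ q.FS N ∧ q.u N ≠ 0 ∧ q.u N ^ n = q.b N ^ n := by
  induction N with
  | zero => exact ⟨q.b_mem 0 0 le_rfl, q.hb 0, rfl⟩
  | succ N ih =>
    obtain ⟨h1, h2, h3⟩ := ih
    have st := q.stp_of N h1 h2 h3
    have hQ := q.Q_mem_of N h1
    have hQ0 : q.Q N ≠ 0 := st.Q_ne
    rw [u_succ]
    refine ⟨mul_mem (mul_mem hQ (q.b_mem _ _ le_rfl)) (inv_mem hQ),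
      mul_ne_zero (mul_ne_zero hQ0 (q.hb _)) (inv_ne_zero hQ0), ?_⟩
    rw [st.conj_pow, ← (q.bn (N + 1) _).eq, mul_assoc, mul_inv_cancel₀ hQ0, mul_one]

theorem u_mem (N : ℕ) : q.u N ∈ q.FS N := (q.u_props N).1
theorem u_ne (N : ℕ) : q.u N ≠ 0 := (q.u_props N).2.1
theorem u_cen (N : ℕ) (y : K) : Commute (q.u N ^ n) y := by
  rw [(q.u_props N).2.2]; exact q.bn N y
theorem stp (N : ℕ) : Stp n q.z (q.u N) (q.a (N + 1)) (q.b (N + 1)) :=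
  q.stp_of N (q.u_mem N) (q.u_ne N) (q.u_props N).2.2
theorem Q_mem (N : ℕ) : q.Q N ∈ q.FS (N + 1) := q.Q_mem_of N (q.u_mem N)
theorem Q_ne (N : ℕ) : q.Q N ≠ 0 := (q.stp N).Q_ne
theorem w_ne (N : ℕ) : q.w N ≠ 0 := (q.stp N).w_ne

theorem th_mem (N : ℕ) : Sth (q.u N) (q.a (N + 1)) ∈ q.FS (N + 1) :=
  neg_mem (mul_mem (q.FS_mono (Nat.le_succ N) (q.u_mem N)) (q.a_mem _ _ le_rfl))

theorem Del_mem (N : ℕ) : SDel n (q.u N) (q.a (N + 1)) ∈ q.FS (N + 1) :=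
  sub_mem (one_mem _) (pow_mem (q.th_mem N) n)

theorem w_mem (N : ℕ) : q.w N ∈ q.FS (N + 1) :=
  mul_mem (mul_mem (inv_mem (natCast_mem _ n)) (q.Del_mem N))
    (sum_mem fun s _ => inv_mem (pow_mem (q.th_mem N) s))

theorem eps_props (N : ℕ) : q.eps N ∈ q.FS N ∧ q.eps N ≠ 0 := by
  induction N with
  | zero => exact ⟨inv_mem (natCast_mem _ n), inv_ne_zero q.hn⟩
  | succ N ih =>
    rw [eps_succ]
    exact ⟨mul_mem (mul_mem (q.FS_mono (Nat.le_succ N) ih.1) (q.w_mem N)) (inv_mem (q.Q_mem N)),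
      mul_ne_zero (mul_ne_zero ih.2 (q.w_ne N)) (inv_ne_zero (q.Q_ne N))⟩

theorem eps_mem (N : ℕ) : q.eps N ∈ q.FS N := (q.eps_props N).1
theorem eps_ne (N : ℕ) : q.eps N ≠ 0 := (q.eps_props N).2

def HS (N : ℕ) : Subfield K := q.FS N ⊓ cenS {q.u N}

theorem mem_HS {N : ℕ} {x : K} : x ∈ q.HS N ↔ x ∈ q.FS N ∧ Commute (q.u N) x := by
  rw [HS, Subfield.mem_inf, mem_cenS]
  simp

theorem comm_th {N : ℕ} {x : K} (hx : x ∈ q.HS N) : Commute (Sth (q.u N) (q.a (N + 1))) x := by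
  rw [mem_HS] at hx
  exact (hx.2.mul_left (q.mem_FS.1 hx.1 _ (Nat.lt_succ_self N)).1).neg_left

theorem comm_Q {N : ℕ} {x : K} (hx : x ∈ q.HS N) : Commute (q.Q N) x := by
  rw [mem_HS] at hx
  exact (Commute.one_left _).add_left (hx.2.mul_left (q.mem_FS.1 hx.1 _ (Nat.lt_succ_self N)).1)

theorem w_comm_of {N : ℕ} {x : K} (hx : Commute (Sth (q.u N) (q.a (N + 1))) x) :
    Commute (q.w N) x := by
  refine (((Nat.cast_commute n x).inv_left₀).mul_left
    ((Commute.one_left _).sub_left (hx.pow_left n))).mul_left ?_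
  exact Commute.sum_left _ _ _ fun s _ => (hx.pow_left s).inv_left₀

theorem comm_w {N : ℕ} {x : K} (hx : x ∈ q.HS N) : Commute (q.w N) x := q.w_comm_of (q.comm_th hx)

theorem HS_mono : Monotone q.HS := by
  refine monotone_nat_of_le_succ fun N x hx => ?_
  have hQ := q.comm_Q hx
  rw [mem_HS] at *
  refine ⟨q.FS_mono (Nat.le_succ N) hx.1, ?_⟩
  rw [u_succ]
  exact (hQ.mul_left (q.mem_FS.1 hx.1 _ (Nat.lt_succ_self N)).2).mul_left hQ.inv_left₀

theorem conj_mem {N : ℕ} {y : K} (hy : y ∈ q.FS (N + 1)) (h : Commute (q.b (N + 1)) y) :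
    q.Q N * y * (q.Q N)⁻¹ ∈ q.HS (N + 1) := by
  rw [mem_HS]
  refine ⟨mul_mem (mul_mem (q.Q_mem N) hy) (inv_mem (q.Q_mem N)), ?_⟩
  rw [u_succ]
  have e : ∀ x y : K, (q.Q N * x * (q.Q N)⁻¹) * (q.Q N * y * (q.Q N)⁻¹)
      = q.Q N * (x * y) * (q.Q N)⁻¹ := by
    intro x y
    simp only [mul_assoc]
    rw [inv_mul_cancel_left₀ (q.Q_ne N)]
  unfold Commute SemiconjBy
  rw [e, e, h.eq]

def CS (N : ℕ) : Subfield K := conjS (q.eps N) (q.eps_ne N) (q.HS N)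

theorem conj_eq (x y t : K) (hx : x ≠ 0) (hy : Commute y t) (hy0 : y ≠ 0) :
    (x * y)⁻¹ * (x * t * x⁻¹) * (x * y) = t := by
  rw [mul_inv_rev]
  simp only [mul_assoc]
  rw [inv_mul_cancel_left₀ hx, inv_mul_cancel_left₀ hx, ← hy.eq, inv_mul_cancel_left₀ hy0]

theorem CS_mono : Monotone q.CS := by
  refine monotone_nat_of_le_succ fun N x hx => ?_
  rw [CS, mem_conjS] at *
  have c1 := q.comm_w hx
  have c2 := q.comm_Q hx
  have := conj_eq (q.eps N) (q.w N * (q.Q N)⁻¹) _ (q.eps_ne N) (c1.mul_left c2.inv_left₀)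
    (mul_ne_zero (q.w_ne N) (inv_ne_zero (q.Q_ne N)))
  rw [eps_succ, mul_assoc (q.eps N)]
  have e : q.eps N * ((q.eps N)⁻¹ * x * q.eps N) * (q.eps N)⁻¹ = x := by
    simp only [mul_assoc]
    rw [mul_inv_cancel_left₀ (q.eps_ne N), mul_inv_cancel₀ (q.eps_ne N), mul_one]
  rw [e] at this
  rw [this]
  exact q.HS_mono (Nat.le_succ N) hx

def DD : Subfield K := unionS q.FS q.FS_mono
def GG : Subfield K := unionS q.HS q.HS_mono
def CC : Subfield K := unionS q.CS q.CS_mono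

theorem GG_le : q.GG ≤ q.DD := fun _ ⟨N, h⟩ => ⟨N, (q.mem_HS.1 h).1⟩

theorem CS_le (N : ℕ) : q.CS N ≤ q.FS N := by
  intro x hx
  rw [CS, mem_conjS] at hx
  have h := (q.mem_HS.1 hx).1
  have e : q.eps N * ((q.eps N)⁻¹ * x * q.eps N) * (q.eps N)⁻¹ = x := by
    simp only [mul_assoc]
    rw [mul_inv_cancel_left₀ (q.eps_ne N), mul_inv_cancel₀ (q.eps_ne N), mul_one]
  rw [← e]
  exact mul_mem (mul_mem (q.eps_mem N) h) (inv_mem (q.eps_mem N))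

theorem CC_le : q.CC ≤ q.DD := fun _ ⟨N, h⟩ => ⟨N, q.CS_le N h⟩

theorem tr_succ {N : ℕ} {v : K} (hv : v ∈ q.FS N) :
    trr n (q.u (N + 1)) (v * q.eps (N + 1)) = trr n (q.u N) (v * q.eps N) := by
  have hf := q.mem_FS.1 (mul_mem hv (q.eps_mem N)) (N + 1) (Nat.lt_succ_self N)
  have := (q.stp N).key (v * q.eps N) hf.1.symm hf.2.symm
  rw [u_succ, eps_succ, ← this]
  simp only [mul_assoc]

theorem tr_le {N M : ℕ} (hNM : N ≤ M) {v : K} (hv : v ∈ q.FS N) :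
    trr n (q.u M) (v * q.eps M) = trr n (q.u N) (v * q.eps N) := by
  induction M, hNM using Nat.le_induction with
  | base => rfl
  | succ M hM ih => rw [q.tr_succ (q.FS_mono hM hv), ih]

open Classical in
noncomputable def lam (v : K) : K :=
  if h : ∃ N, v ∈ q.FS N then trr n (q.u h.choose) (v * q.eps h.choose) else 0

theorem lam_eq {N : ℕ} {v : K} (hv : v ∈ q.FS N) :
    q.lam v = trr n (q.u N) (v * q.eps N) := by
  have h : ∃ N, v ∈ q.FS N := ⟨N, hv⟩
  rw [lam, dif_pos h, ← q.tr_le (le_max_left _ N) h.choose_spec, q.tr_le (le_max_right _ N) hv]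

theorem lam_mem_HS {N : ℕ} {v : K} (hv : v ∈ q.FS N) : q.lam v ∈ q.HS N := by
  rw [q.lam_eq hv, mem_HS]
  refine ⟨?_, trr_comm_self n _ _ (q.u_ne N) (q.u_cen N)⟩
  exact sum_mem fun k _ => mul_mem (mul_mem (pow_mem (q.u_mem N) k)
    (mul_mem hv (q.eps_mem N))) (inv_mem (pow_mem (q.u_mem N) k))

theorem common2 {A : ℕ → Subfield K} {B : ℕ → Subfield K} (hA : Monotone A) (hB : Monotone B)
    {x y : K} (hx : x ∈ unionS A hA) (hy : y ∈ unionS B hB) : ∃ N, x ∈ A N ∧ y ∈ B N := by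
  obtain ⟨N, hN⟩ := hx
  obtain ⟨M, hM⟩ := hy
  exact ⟨max N M, hA (le_max_left _ _) hN, hB (le_max_right _ _) hM⟩

theorem lam_mem {v : K} (hv : v ∈ q.DD) : q.lam v ∈ q.GG := by
  obtain ⟨N, hN⟩ := hv
  exact ⟨N, q.lam_mem_HS hN⟩

theorem lam_add {x y : K} (hx : x ∈ q.DD) (hy : y ∈ q.DD) : q.lam (x + y) = q.lam x + q.lam y := by
  obtain ⟨N, h1, h2⟩ := common2 _ _ hx hy
  rw [q.lam_eq h1, q.lam_eq h2, q.lam_eq (add_mem h1 h2), add_mul, trr_add]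

theorem lam_smul {g x : K} (hg : g ∈ q.GG) (hx : x ∈ q.DD) : q.lam (g * x) = g * q.lam x := by
  obtain ⟨N, h1, h2⟩ := common2 _ _ hg hx
  rw [q.lam_eq h2, q.lam_eq (mul_mem (q.mem_HS.1 h1).1 h2), mul_assoc,
    trr_mul_left _ _ _ _ (q.mem_HS.1 h1).2.symm]

/-- right semilinearity over the conjugate ring -/
theorem lam_right {N : ℕ} {t x : K} (ht : t ∈ q.HS N) (hx : x ∈ q.FS N) :
    q.lam (x * (q.eps N * t * (q.eps N)⁻¹)) = q.lam x * t := by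
  have ht' := q.mem_HS.1 ht
  rw [q.lam_eq hx, q.lam_eq (mul_mem hx (mul_mem (mul_mem (q.eps_mem N) ht'.1)
    (inv_mem (q.eps_mem N)))), ← trr_mul_right _ _ _ _ ht'.2.symm]
  simp only [mul_assoc]
  rw [inv_mul_cancel₀ (q.eps_ne N), mul_one]

theorem e_mem (N : ℕ) : q.a 0 ∈ q.FS N := q.a_mem 0 N (Nat.zero_le N)

theorem lam_pow (i j : ℕ) (hi : i < n) (hj : j < n) :
    q.lam (q.a 0 ^ i * (q.a 0 ^ j)⁻¹) = if i = j then 1 else 0 := by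
  rw [q.lam_eq (mul_mem (pow_mem (q.e_mem 0) i) (inv_mem (pow_mem (q.e_mem 0) j)))]
  change trr n (q.b 0) (_ * (n : K)⁻¹) = _
  rw [trr_mul_right _ _ _ _ (Nat.cast_commute n _).inv_left₀,
    trr_pow q.croot _ _ (q.hb 0) (q.ha 0) (q.ba 0) i j hi hj]
  split_ifs
  · exact mul_inv_cancel₀ q.hn
  · exact zero_mul _

theorem expand {v : K} (hv : v ∈ q.DD) :
    v = ∑ j : Fin n, q.lam (v * (q.a 0 ^ (j : ℕ))⁻¹) * q.a 0 ^ (j : ℕ) := by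
  obtain ⟨N, hN⟩ := hv
  have hn : 0 < n := Nat.pos_of_ne_zero (by rintro rfl; exact q.hn (by simp))
  let A : Matrix (Fin n) (Fin n) K := fun j m =>
    q.u N ^ (m : ℕ) * q.a 0 ^ (j : ℕ) * (q.u N ^ (m : ℕ))⁻¹
  let B : Matrix (Fin n) (Fin n) K := fun m s =>
    q.u N ^ (m : ℕ) * ((q.a 0 ^ (s : ℕ))⁻¹ * q.eps N) * (q.u N ^ (m : ℕ))⁻¹
  have hu : ∀ m : ℕ, q.u N ^ m ≠ 0 := fun m => pow_ne_zero m (q.u_ne N)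
  have hAB : A * B = 1 := by
    ext j s
    rw [Matrix.mul_apply, Matrix.one_apply]
    have := q.lam_pow j s j.2 s.2
    rw [q.lam_eq (N := N) (mul_mem (pow_mem (q.e_mem N) _) (inv_mem (pow_mem (q.e_mem N) _))), trr,
      Finset.sum_range] at this
    simp only [Fin.ext_iff]
    rw [← this]
    refine Finset.sum_congr rfl fun m _ => ?_
    simp only [A, B, mul_assoc]
    rw [inv_mul_cancel_left₀ (hu m)]
  have hBA : B * A = 1 := mul_eq_one_comm.1 hAB
  have key : ∀ m : Fin n, ∑ j, B m j * A j ⟨0, hn⟩ = if m = ⟨0, hn⟩ then 1 else 0 := by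
    intro m
    rw [← Matrix.mul_apply, hBA, Matrix.one_apply]
  have e : ∀ j : Fin n, q.lam (v * (q.a 0 ^ (j : ℕ))⁻¹) * q.a 0 ^ (j : ℕ) =
      ∑ m : Fin n, (q.u N ^ (m : ℕ) * v * (q.u N ^ (m : ℕ))⁻¹) * (B m j * A j ⟨0, hn⟩) := by
    intro j
    rw [q.lam_eq (mul_mem hN (inv_mem (pow_mem (q.e_mem N) _))), trr, Finset.sum_range,
      Finset.sum_mul]
    refine Finset.sum_congr rfl fun m _ => ?_
    simp only [A, B, mul_assoc, pow_zero, inv_one, mul_one, one_mul]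
    rw [inv_mul_cancel_left₀ (hu m)]
  simp only [e]
  rw [Finset.sum_comm]
  simp only [← Finset.mul_sum, key]
  simp

theorem solve (t : Fin n → K) (ht : ∀ i, t i ∈ q.GG) :
    ∃ x ∈ q.DD, ∀ j : Fin n, q.lam (q.a 0 ^ (j : ℕ) * x) = t j := by
  have : ∃ N, ∀ i, t i ∈ q.HS N := by
    choose f hf using ht
    exact ⟨Finset.univ.sup f, fun i => q.HS_mono (Finset.le_sup (Finset.mem_univ i)) (hf i)⟩
  obtain ⟨N, hN⟩ := this
  have hm : ∀ s : Fin n, (q.a 0 ^ (s : ℕ))⁻¹ * (q.eps N * t s * (q.eps N)⁻¹) ∈ q.FS N := fun s =>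
    mul_mem (inv_mem (pow_mem (q.e_mem N) _)) (mul_mem (mul_mem (q.eps_mem N)
      (q.mem_HS.1 (hN s)).1) (inv_mem (q.eps_mem N)))
  have hx := sum_mem (t := Finset.univ) (fun s _ => hm s)
  refine ⟨∑ s : Fin n, (q.a 0 ^ (s : ℕ))⁻¹ * (q.eps N * t s * (q.eps N)⁻¹), ⟨N, hx⟩, fun j => ?_⟩
  rw [q.lam_eq (mul_mem (pow_mem (q.e_mem N) _) hx), Finset.mul_sum, Finset.sum_mul, trr_sum]
  have e : ∀ s : Fin n, trr n (q.u N) (q.a 0 ^ (j : ℕ) * ((q.a 0 ^ (s : ℕ))⁻¹ *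
      (q.eps N * t s * (q.eps N)⁻¹)) * q.eps N) = (if (j : ℕ) = s then 1 else 0) * t s := by
    intro s
    have h1 := mul_mem (pow_mem (q.e_mem N) j) (inv_mem (pow_mem (q.e_mem N) s))
    rw [← q.lam_eq (mul_mem (pow_mem (q.e_mem N) _) (hm s)), ← mul_assoc, q.lam_right (hN s) h1,
      q.lam_pow _ _ j.2 s.2]
  simp only [e]
  simp [← Fin.ext_iff]

theorem lam_one : q.lam 1 = 1 := by
  have hn : 0 < n := Nat.pos_of_ne_zero (by rintro rfl; exact q.hn (by simp))
  simpa using q.lam_pow 0 0 hn hn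

theorem eD : q.a 0 ∈ q.DD := ⟨0, q.e_mem 0⟩

theorem lam_CC {c : K} (hc : c ∈ q.CC) {y : K} (hy : y ∈ q.DD) :
    q.lam (y * c) = q.lam y * q.lam c := by
  obtain ⟨N, h1, h2⟩ := common2 _ _ hc hy
  rw [CS, mem_conjS] at h1
  have e : q.eps N * ((q.eps N)⁻¹ * c * q.eps N) * (q.eps N)⁻¹ = c := by
    simp only [mul_assoc]
    rw [mul_inv_cancel_left₀ (q.eps_ne N), mul_inv_cancel₀ (q.eps_ne N), mul_one]
  have k1 := q.lam_right h1 h2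
  have k2 := q.lam_right h1 (one_mem (q.FS N))
  rw [e] at k1 k2
  rw [one_mul, lam_one, one_mul] at k2
  rw [k1, k2]

theorem e_nG (h2 : 2 ≤ n) : q.a 0 ∉ q.GG := by
  intro h
  have h1 := q.lam_smul h (one_mem q.DD)
  have h3 := q.lam_pow 1 0 (by omega) (by omega)
  simp only [pow_one, pow_zero, inv_one, mul_one, lam_one] at h1 h3
  rw [h1] at h3
  exact q.ha 0 (by simpa using h3)

theorem e_nC (h2 : 2 ≤ n) : q.a 0 ∉ q.CC := by
  intro h
  have h1 := q.lam_CC h (inv_mem q.eD)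
  have h3 := q.lam_pow 1 0 (by omega) (by omega)
  simp only [pow_one, pow_zero, inv_one, mul_one] at h3
  rw [inv_mul_cancel₀ (q.ha 0), lam_one, h3] at h1
  simp at h1

theorem span_right {N : ℕ} {f : K} (hf : f ∈ q.FS N) : ∃ s1 ∈ q.GG, ∃ s2 ∈ q.GG,
    f = (q.Q N)⁻¹ * s1 + q.a (N + 1) * (q.Q N)⁻¹ * s2 := by
  have hc := q.mem_FS.1 hf (N + 1) (Nat.lt_succ_self N)
  have hb := (q.mem_FS.1 (q.u_mem N) (N + 1) (Nat.lt_succ_self N))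
  have h1 := q.FS_mono (Nat.le_succ N) hf
  have h2 := q.FS_mono (Nat.le_succ N) (q.u_mem N)
  refine ⟨_, ⟨N + 1, q.conj_mem h1 hc.2⟩, _,
    ⟨N + 1, q.conj_mem (mul_mem h1 h2) (hc.2.mul_right hb.2)⟩, ?_⟩
  have hQ := q.Q_ne N
  simp only [mul_assoc]
  rw [inv_mul_cancel_left₀ hQ, inv_mul_cancel_left₀ hQ]
  have e : q.a (N + 1) * (f * (q.u N * (q.Q N)⁻¹)) = f * (q.u N * q.a (N + 1)) * (q.Q N)⁻¹ := by
    rw [← mul_assoc, hc.1.eq, mul_assoc, ← mul_assoc (q.a (N + 1)), hb.1.eq]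
    simp only [mul_assoc]
  have e2 : f * (q.Q N)⁻¹ + f * (q.u N * q.a (N + 1)) * (q.Q N)⁻¹ = f * q.Q N * (q.Q N)⁻¹ := by
    rw [← add_mul, Q, SQ, mul_add, mul_one]
  rw [e, e2, mul_inv_cancel_right₀ hQ]

theorem right2 (h2 : 2 ≤ n) {f : K} (hf : f ∈ q.DD) :
    ∃ g ∈ q.GG, ∃ h ∈ q.GG, f = q.a 0 * g + h := by
  obtain ⟨N, hN⟩ := hf
  obtain ⟨s1, h1, s2, h2', e1⟩ := q.span_right (one_mem (q.FS N))
  obtain ⟨s3, h3, s4, h4, e2⟩ := q.span_right (q.e_mem N)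
  obtain ⟨s5, h5, s6, h6, e3⟩ := q.span_right hN
  exact elimR q.GG _ _ _ _ s1 s2 s3 s4 s5 s6 h1 h2' h3 h4 h5 h6 e1 e2 e3 (q.e_nG h2)

theorem conjC {N : ℕ} {y : K} (hy : y ∈ q.FS (N + 1)) (h : Commute (q.b (N + 1)) y) :
    q.eps N * q.w N * y * (q.eps N * q.w N)⁻¹ ∈ q.CC := by
  refine ⟨N + 1, ?_⟩
  rw [CS, mem_conjS, eps_succ]
  have e := q.conj_mem hy h
  have h0 : q.eps N * q.w N ≠ 0 := mul_ne_zero (q.eps_ne N) (q.w_ne N)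
  generalize q.eps N * q.w N = c at *
  rw [mul_inv_rev, inv_inv]
  simp only [mul_assoc] at e ⊢
  rw [inv_mul_cancel_left₀ h0, inv_mul_cancel_left₀ h0]
  exact e

theorem span_left {N : ℕ} {f : K} (hf : f ∈ q.FS N) : ∃ s1 ∈ q.CC, ∃ s2 ∈ q.CC,
    f = s1 * (q.eps N * q.w N) + s2 * (q.eps N * q.w N * (q.a (N + 1))⁻¹) := by
  have hf1 : (q.eps N)⁻¹ * f ∈ q.FS N := mul_mem (inv_mem (q.eps_mem N)) hf
  have ef : f = q.eps N * ((q.eps N)⁻¹ * f) := by rw [mul_inv_cancel_left₀ (q.eps_ne N)]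
  generalize (q.eps N)⁻¹ * f = f1 at hf1 ef
  have hc := q.mem_FS.1 hf1 (N + 1) (Nat.lt_succ_self N)
  have hb := (q.mem_FS.1 (q.u_mem N) (N + 1) (Nat.lt_succ_self N))
  have h1 := q.FS_mono (Nat.le_succ N) hf1
  have h2 := q.FS_mono (Nat.le_succ N) (q.u_mem N)
  have st := q.stp N
  set th := Sth (q.u N) (q.a (N + 1)) with hth
  set c := q.w N * (1 - th⁻¹) with hcdef
  have hc1 : c = (n : K)⁻¹ * SDel n (q.u N) (q.a (N + 1)) * (1 - (th ^ n)⁻¹) := st.w_mul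
  have hthn : Commute (th ^ n) (q.b (N + 1)) := by
    have : th ^ n = 1 - SDel n (q.u N) (q.a (N + 1)) := by rw [SDel]; abel
    rw [this]
    exact (Commute.one_left _).sub_left st.Del_comm_v
  have hcb : Commute (q.b (N + 1)) c := by
    rw [hc1]
    exact ((((Nat.cast_commute n _).inv_left₀).mul_left st.Del_comm_v).mul_left
      ((Commute.one_left _).sub_left hthn.inv_left₀)).symm
  have hcm : c ∈ q.FS (N + 1) :=
    mul_mem (q.w_mem N) (sub_mem (one_mem _) (inv_mem (q.th_mem N)))
  have ht1 : (1 - th⁻¹) ≠ 0 := by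
    rw [sub_ne_zero]
    intro e
    apply st.thn_ne
    rw [← hth, ← inv_inv th, ← e, inv_one, one_pow]
  have hc0 : c ≠ 0 := mul_ne_zero (q.w_ne N) ht1
  have hwt : Commute (q.w N) (1 - th⁻¹) :=
    q.w_comm_of ((Commute.one_right _).sub_right (Commute.refl th).inv_right₀)
  have hct : Commute c (1 - th⁻¹) := hwt.mul_left (Commute.refl _)
  refine ⟨_, q.conjC (mul_mem (inv_mem hcm) h1) (hcb.inv_right₀.mul_right hc.2), _,
    q.conjC (mul_mem (inv_mem hcm) (mul_mem (inv_mem h2) h1))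
      (hcb.inv_right₀.mul_right (hb.2.inv_right₀.mul_right hc.2)), ?_⟩
  have h0 : q.eps N * q.w N ≠ 0 := mul_ne_zero (q.eps_ne N) (q.w_ne N)
  have e1 : ∀ x y : K, q.eps N * q.w N * x * (q.eps N * q.w N)⁻¹ * (q.eps N * q.w N * y) =
      q.eps N * (q.w N * x * y) := by
    intro x y
    generalize hg : q.eps N * q.w N = g at *
    simp only [mul_assoc]
    rw [inv_mul_cancel_left₀ h0, ← hg]
    simp only [mul_assoc]
  have e2 : ∀ x : K, q.eps N * q.w N * x * (q.eps N * q.w N)⁻¹ * (q.eps N * q.w N) =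
      q.eps N * (q.w N * x) := by
    intro x
    have := e1 x 1
    simpa using this
  rw [e1, e2, ← mul_add]
  have e3 : q.w N * (c⁻¹ * f1) + q.w N * (c⁻¹ * ((q.u N)⁻¹ * f1)) * (q.a (N + 1))⁻¹ =
      q.w N * c⁻¹ * (1 - th⁻¹) * f1 := by
    have hud : Commute (q.u N)⁻¹ (q.a (N + 1))⁻¹ := hb.1.symm.inv_left₀.inv_right₀
    have : th⁻¹ = -((q.u N)⁻¹ * (q.a (N + 1))⁻¹) := by
      rw [hth, Sth, inv_neg, mul_inv_rev, hud.eq]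
    rw [this, sub_neg_eq_add, mul_add, add_mul, mul_one]
    simp only [mul_assoc]
    rw [(hc.1.inv_left₀).eq]
  have e4 : q.w N * c⁻¹ * (1 - th⁻¹) = 1 := by
    rw [mul_assoc, hct.inv_left₀.eq, ← mul_assoc, ← hcdef, mul_inv_cancel₀ hc0]
  rw [e3, e4, one_mul]
  exact ef

theorem left2 (h2 : 2 ≤ n) {f : K} (hf : f ∈ q.DD) :
    ∃ g ∈ q.CC, ∃ h ∈ q.CC, f = g * q.a 0 + h := by
  obtain ⟨N, hN⟩ := hf
  obtain ⟨s1, h1, s2, h2', e1⟩ := q.span_left (one_mem (q.FS N))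
  obtain ⟨s3, h3, s4, h4, e2⟩ := q.span_left (q.e_mem N)
  obtain ⟨s5, h5, s6, h6, e3⟩ := q.span_left hN
  exact elimL q.CC _ _ _ _ s1 s2 s3 s4 s5 s6 h1 h2' h3 h4 h5 h6 e1 e2 e3 (q.e_nC h2)

/-- coordinates -/
theorem coord {g : Fin n → K} (hg : ∀ i, g i ∈ q.GG) (s : Fin n) :
    q.lam ((∑ j : Fin n, g j * q.a 0 ^ (j : ℕ)) * (q.a 0 ^ (s : ℕ))⁻¹) = g s := by
  have hp : ∀ j : Fin n, q.a 0 ^ (j : ℕ) * (q.a 0 ^ (s : ℕ))⁻¹ ∈ q.DD := fun j =>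
    mul_mem (pow_mem q.eD _) (inv_mem (pow_mem q.eD _))
  have hs : ∀ (T : Finset (Fin n)) (f : Fin n → K), (∀ i, f i ∈ q.DD) →
      q.lam (∑ i ∈ T, f i) = ∑ i ∈ T, q.lam (f i) := by
    intro T f hf
    induction T using Finset.induction_on with
    | empty =>
      have := q.lam_smul (zero_mem q.GG) (one_mem q.DD)
      simpa using this
    | insert a T ha ih =>
      rw [Finset.sum_insert ha, Finset.sum_insert ha, q.lam_add (hf a) (sum_mem fun i _ => hf i), ih]
  rw [Finset.sum_mul, hs _ _ (fun j => by
    rw [mul_assoc]; exact mul_mem (q.GG_le (hg j)) (hp j))]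
  have : ∀ j : Fin n, q.lam (g j * q.a 0 ^ (j : ℕ) * (q.a 0 ^ (s : ℕ))⁻¹) =
      g j * (if (j : ℕ) = s then 1 else 0) := by
    intro j
    rw [mul_assoc, q.lam_smul (hg j) (hp j), q.lam_pow _ _ j.2 s.2]
  simp only [this]
  simp [← Fin.ext_iff]

theorem lam_zero : q.lam 0 = 0 := by
  have := q.lam_smul (zero_mem q.GG) (one_mem q.DD)
  simpa using this

theorem mD (i j : ℕ) {x : K} (hx : x ∈ q.DD) : q.a 0 ^ i * x * (q.a 0 ^ j)⁻¹ ∈ q.DD :=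
  mul_mem (mul_mem (pow_mem q.eD _) hx) (inv_mem (pow_mem q.eD _))

noncomputable def phiF (x : q.DD) : Matrix (Fin n) (Fin n) q.GG :=
  Matrix.of fun i j => ⟨q.lam (q.a 0 ^ (i : ℕ) * x * (q.a 0 ^ (j : ℕ))⁻¹),
    q.lam_mem (q.mD i j x.2)⟩

theorem phiF_apply (x : q.DD) (i j : Fin n) :
    (q.phiF x i j : K) = q.lam (q.a 0 ^ (i : ℕ) * x * (q.a 0 ^ (j : ℕ))⁻¹) := rfl

theorem phiF_mul (x y : q.DD) : q.phiF (x * y) = q.phiF x * q.phiF y := by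
  ext i j
  rw [Matrix.mul_apply]
  simp only [AddSubmonoidClass.coe_finsetSum, Subfield.coe_mul, phiF_apply]
  have hx := q.expand (mul_mem (pow_mem q.eD i) x.2)
  have e : q.a 0 ^ (i : ℕ) * ((x : K) * y) = ∑ j : Fin n,
      (∑ k : Fin n, q.lam (q.a 0 ^ (i : ℕ) * x * (q.a 0 ^ (k : ℕ))⁻¹) *
        q.lam (q.a 0 ^ (k : ℕ) * y * (q.a 0 ^ (j : ℕ))⁻¹)) * q.a 0 ^ (j : ℕ) := by
    conv_lhs => rw [← mul_assoc, hx, Finset.sum_mul]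
    simp only [Finset.sum_mul]
    rw [Finset.sum_comm]
    refine Finset.sum_congr rfl fun k _ => ?_
    have hy := q.expand (mul_mem (pow_mem q.eD k) y.2)
    conv_lhs => rw [mul_assoc, hy, Finset.mul_sum]
    simp only [mul_assoc]
  rw [e]
  exact q.coord (fun j => sum_mem fun k _ => mul_mem (q.lam_mem (q.mD _ _ x.2))
    (q.lam_mem (q.mD _ _ y.2))) j

noncomputable def phi : q.DD →+* Matrix (Fin n) (Fin n) q.GG where
  toFun := q.phiF
  map_zero' := by
    ext i j
    simp [lam_zero, phiF_apply]
  map_one' := by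
    ext i j
    simp [q.lam_pow _ _ i.2 j.2, Matrix.one_apply, Fin.ext_iff, phiF_apply]
    split_ifs <;> simp
  map_add' x y := by
    ext i j
    simp only [Matrix.add_apply, Subfield.coe_add, mul_add, add_mul, phiF_apply]
    exact q.lam_add (q.mD i j x.2) (q.mD i j y.2)
  map_mul' := q.phiF_mul

theorem phi_apply (x : q.DD) (i j : Fin n) :
    (q.phi x i j : K) = q.lam (q.a 0 ^ (i : ℕ) * x * (q.a 0 ^ (j : ℕ))⁻¹) := rfl

theorem sumD {g : Fin n → K} (hg : ∀ i, g i ∈ q.GG) :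
    ∑ j : Fin n, g j * q.a 0 ^ (j : ℕ) ∈ q.DD :=
  sum_mem fun j _ => mul_mem (q.GG_le (hg j)) (pow_mem q.eD _)

theorem tight1 : ATight ⇑q.phi 1 := by
  intro g
  have hn : 0 < n := Nat.pos_of_ne_zero (by rintro rfl; exact q.hn (by simp))
  have hg : ∀ j, ((g ⟨0, hn⟩ j : q.GG) : K) ∈ q.GG := fun j => (g ⟨0, hn⟩ j).2
  refine ⟨⟨_, q.sumD hg⟩, fun i j hi _ => ?_⟩
  obtain rfl : i = ⟨0, hn⟩ := Fin.ext (by simp; omega)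
  apply Subtype.ext
  rw [phi_apply]
  simp only [pow_zero, one_mul]
  exact q.coord hg j

theorem tight2 (h2 : 2 ≤ n) : ATight ⇑q.phi 2 := by
  intro g
  have hg : ∀ i j, ((g i j : q.GG) : K) ∈ q.GG := fun i j => (g i j).2
  set i0 : Fin n := ⟨0, by omega⟩
  set i1 : Fin n := ⟨1, by omega⟩
  have c0 := q.coord (hg i0)
  have c1 := q.coord (hg i1)
  have m0 := q.sumD (hg i0)
  have m1 := q.sumD (hg i1)
  generalize ∑ j : Fin n, ((g i0 j : q.GG) : K) * q.a 0 ^ (j : ℕ) = y0 at c0 m0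
  generalize ∑ j : Fin n, ((g i1 j : q.GG) : K) * q.a 0 ^ (j : ℕ) = y1 at c1 m1
  obtain ⟨s, hs, t, ht, e⟩ := q.right2 h2 (sub_mem m1 (mul_mem q.eD m0))
  have hz : ∀ s ∈ q.GG, ∀ j : Fin n, 2 ≤ (j : ℕ) + 1 → q.lam (s * (q.a 0 ^ (j : ℕ))⁻¹) = 0 := by
    intro s hs j hj
    have := q.lam_pow 0 j (by omega) j.2
    rw [pow_zero, one_mul, if_neg (by omega)] at this
    rw [q.lam_smul hs (inv_mem (pow_mem q.eD _)), this, mul_zero]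
  refine ⟨⟨y0 + s, add_mem m0 (q.GG_le hs)⟩, fun i j hi hj => ?_⟩
  apply Subtype.ext
  rw [phi_apply]
  have hp : ∀ {x : K}, x ∈ q.DD → x * (q.a 0 ^ (j : ℕ))⁻¹ ∈ q.DD := fun hx =>
    mul_mem hx (inv_mem (pow_mem q.eD _))
  rcases (show (i : ℕ) = 0 ∨ (i : ℕ) = 1 by omega) with h | h
  · obtain rfl : i = i0 := Fin.ext h
    simp only [i0, pow_zero, one_mul]
    rw [add_mul, q.lam_add (hp m0) (hp (q.GG_le hs)), c0, hz s hs j hj, add_zero]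
  · obtain rfl : i = i1 := Fin.ext h
    simp only [i1, pow_one]
    have e' : q.a 0 * (y0 + s) = y1 + (-t) := by
      rw [mul_add, ← sub_eq_iff_eq_add.2 e]; abel
    rw [e', add_mul, q.lam_add (hp m1) (hp (q.GG_le (neg_mem ht))), c1, hz _ (neg_mem ht) j hj,
      add_zero]

theorem tightn : ATight ⇑q.phi n := by
  intro g
  have hn : 0 < n := Nat.pos_of_ne_zero (by rintro rfl; exact q.hn (by simp))
  set l : Fin n := ⟨n - 1, by omega⟩
  obtain ⟨y, hy, e⟩ := q.solve (fun i => g i l) (fun i => (g i l).2)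
  refine ⟨⟨y * q.a 0 ^ (n - 1), mul_mem hy (pow_mem q.eD _)⟩, fun i j hi hj => ?_⟩
  obtain rfl : j = l := Fin.ext (by simp only [l]; omega)
  apply Subtype.ext
  rw [phi_apply, ← e]
  simp only [l]
  rw [← mul_assoc, mul_inv_cancel_right₀ (pow_ne_zero _ (q.ha 0))]

theorem tightn1 (h2 : 2 ≤ n) : ATight ⇑q.phi (n - 1) := by
  intro g
  set l : Fin n := ⟨n - 1, by omega⟩
  set k : Fin n := ⟨n - 2, by omega⟩
  obtain ⟨y0, hy0, e0⟩ := q.solve (fun i => g i l) (fun i => (g i l).2)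
  obtain ⟨y1, hy1, e1⟩ := q.solve (fun i => g i k) (fun i => (g i k).2)
  have hP : q.a 0 ^ (n - 1) ≠ 0 := pow_ne_zero _ (q.ha 0)
  have hPm : q.a 0 ^ (n - 1) ∈ q.DD := pow_mem q.eD _
  obtain ⟨s, hs, t, ht, e⟩ := q.left2 h2 (mul_mem hPm (sub_mem hy1 (mul_mem hy0 q.eD)))
  have hsm : (q.a 0 ^ (n - 1))⁻¹ * s ∈ q.DD := mul_mem (inv_mem hPm) (q.CC_le hs)
  have htm : (q.a 0 ^ (n - 1))⁻¹ * -t ∈ q.DD := mul_mem (inv_mem hPm) (q.CC_le (neg_mem ht))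
  have hz : ∀ s ∈ q.CC, ∀ i : Fin n, (i : ℕ) < n - 1 →
      q.lam (q.a 0 ^ (i : ℕ) * ((q.a 0 ^ (n - 1))⁻¹ * s)) = 0 := by
    intro s hs i hi
    have := q.lam_pow i (n - 1) i.2 (by omega)
    rw [if_neg (by omega)] at this
    rw [← mul_assoc, q.lam_CC hs (mul_mem (pow_mem q.eD _) (inv_mem hPm)), this, zero_mul]
  refine ⟨⟨(y0 + (q.a 0 ^ (n - 1))⁻¹ * s) * q.a 0 ^ (n - 1), mul_mem (add_mem hy0 hsm) hPm⟩,
    fun i j hi hj => ?_⟩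
  apply Subtype.ext
  rw [phi_apply]
  have hp : ∀ {x : K}, x ∈ q.DD → q.a 0 ^ (i : ℕ) * x ∈ q.DD := fun hx =>
    mul_mem (pow_mem q.eD _) hx
  rcases (show (j : ℕ) = n - 1 ∨ (j : ℕ) = n - 2 by omega) with h | h
  · obtain rfl : j = l := Fin.ext h
    simp only [l]
    rw [← mul_assoc, mul_inv_cancel_right₀ hP, mul_add, q.lam_add (hp hy0) (hp hsm), e0,
      hz s hs i hi, add_zero]
  · obtain rfl : j = k := Fin.ext h
    simp only [k]
    have e2 : q.a 0 ^ (n - 1) * (q.a 0 ^ (n - 2))⁻¹ = q.a 0 := by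
      rw [show n - 1 = 1 + (n - 2) by omega, pow_add, pow_one,
        mul_inv_cancel_right₀ (pow_ne_zero _ (q.ha 0))]
    have e3 : (y0 + (q.a 0 ^ (n - 1))⁻¹ * s) * q.a 0 = y1 + (q.a 0 ^ (n - 1))⁻¹ * (-t) := by
      have : s * q.a 0 = q.a 0 ^ (n - 1) * (y1 - y0 * q.a 0) - t := by rw [e]; abel
      rw [add_mul, mul_assoc, this, mul_sub, inv_mul_cancel_left₀ hP, mul_neg]
      abel
    rw [mul_assoc (q.a 0 ^ (i : ℕ)), mul_assoc _ (q.a 0 ^ (n - 1)), e2, e3, mul_add,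
      q.lam_add (hp hy1) (hp htm), e1, hz _ (neg_mem ht) i hi, add_zero]

end QData

end Tower2

/-- For every positive integer `n ≤ 4` there exist division rings `F` and `G` and a
tight ring embedding `F → Mₙ(G)`. -/
theorem stmt7 (n : ℕ) (h1 : 1 ≤ n) (h4 : n ≤ 4) : Nonempty (TightPair n) := by
  obtain ⟨K, iK, ⟨q⟩⟩ := exists_QData n h1
  have : Nonempty (Fin n) := ⟨⟨0, h1⟩⟩
  refine ⟨{ F := q.DD, G := q.GG, φ := q.phi, injφ := q.phi.injective, tight := ?_ }⟩
  intro a ha han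
  by_cases c1 : a = 1
  · subst c1; exact q.tight1
  by_cases c2 : a = n
  · subst c2; exact q.tightn
  by_cases c3 : a = 2
  · subst c3; exact q.tight2 (by omega)
  · have : a = n - 1 := by omega
    subst this
    exact q.tightn1 (by omega)
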